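/- Let (A,B) be a NITA generated by a non-real b_3 of degree 3 with b̄_3·b_3 = 1 + b_8, b_3² = c_3 + b_6 with c_3 real, (b_8·b_3, b_8·b_3) = 3, and no nontrivial basis elements of degree 1 or 2. With x_6 defined by b̄_3·c_3 = b_3 + x_6, there exist d_3 ∈ B of degree 3, d_3 ∉ {c_3, b_3, b̄_3}, and x_9, x_15, d_9 such that x_9·c_3 = x̄_15 + d_3 + x̄_9; moreover d_3·d̄_3 = 1 + c_8 for some real c_8 ∈ B of degree 8 with c_8 ≠ b_8, d_3² = b_6 + y_3 for some real y_3 ∈ B of degree 3 with y_3 ∉ {b_3, b̄_3, c_3}, and y_3² = 1 + c_8. -/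

import Mathlib

/-- A normalized table algebra datum on a commutative `ℂ`-algebra `A`:
a distinguished basis `B` containing `1`, an involutive algebra
endomorphism `bar` permuting `B`, a bilinear form for which `B` is
orthonormal and which satisfies `(a, bc) = (a·b̄, c)`, nonnegative real
structure constants, and a degree homomorphism positive on `B`. -/
structure TAData (A : Type) [CommRing A] [Algebra ℂ A] : Type where
  B : Finset A
  one_mem : (1 : A) ∈ B
  indep : LinearIndependent ℂ (fun b : {x : A // x ∈ B} => (b : A))
  span_top : Submodule.span ℂ (B : Set A) = ⊤
  bar : A →ₐ[ℂ] A
  bar_bar : ∀ a : A, bar (bar a) = a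
  bar_mem : ∀ b ∈ B, bar b ∈ B
  ip : A →ₗ[ℂ] A →ₗ[ℂ] ℂ
  ip_symm : ∀ a b : A, ip a b = ip b a
  ip_self : ∀ b ∈ B, ip b b = 1
  ip_ne : ∀ b ∈ B, ∀ c ∈ B, b ≠ c → ip b c = 0
  ip_assoc : ∀ a b c : A, ip a (b * c) = ip (a * bar b) c
  struct_nonneg : ∀ b ∈ B, ∀ c ∈ B, ∀ d ∈ B, ∃ r : ℝ, 0 ≤ r ∧ ip (b * c) d = (r : ℂ)
  deg : A →ₐ[ℂ] ℂ
  deg_pos : ∀ b ∈ B, ∃ r : ℝ, 0 < r ∧ deg b = (r : ℂ)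

namespace TAData

variable {A : Type} [CommRing A] [Algebra ℂ A]

/-- Integrality (making a table algebra a NITA): all structure constants are
nonnegative integers and all degrees are positive integers. -/
def Integral (T : TAData A) : Prop :=
  (∀ b ∈ T.B, ∀ c ∈ T.B, ∀ d ∈ T.B, ∃ n : ℕ, T.ip (b * c) d = (n : ℂ)) ∧
  (∀ b ∈ T.B, ∃ n : ℕ, 0 < n ∧ T.deg b = (n : ℂ))

/-- `L₁(B) = {1}` and `L₂(B) = ∅`: no nontrivial basis elements of degree 1 or 2. -/
def NoSmall (T : TAData A) : Prop :=
  (∀ b ∈ T.B, T.deg b = 1 → b = 1) ∧ (∀ b ∈ T.B, T.deg b ≠ 2)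

/-- The table algebra is generated (as an algebra) by `b` (and its conjugate). -/
def GeneratedBy (T : TAData A) (b : A) : Prop :=
  Algebra.adjoin ℂ ({b, T.bar b} : Set A) = ⊤

/-- A table subset of `B`: contains `1`, closed under the involution and under
supports of products. -/
def IsTableSubset (T : TAData A) (C : Set A) : Prop :=
  C ⊆ ↑T.B ∧ (1 : A) ∈ C ∧ (∀ b ∈ C, T.bar b ∈ C) ∧
    ∀ b ∈ C, ∀ c ∈ C, ∀ d ∈ T.B, T.ip (b * c) d ≠ 0 → d ∈ C

end TAData

namespace TAData

variable {A : Type} [CommRing A] [Algebra ℂ A] {T : TAData A}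

section Form

variable (T)

lemma ip_mul_left (a u v : A) : T.ip (a * u) v = T.ip u (T.bar a * v) := by
  rw [T.ip_assoc, T.bar_bar, mul_comm]

lemma ip_bar_mul (a u v : A) : T.ip (T.bar a * u) v = T.ip u (a * v) := by
  rw [ip_mul_left, T.bar_bar]

lemma ip_eq_ip_one (u v : A) : T.ip u v = T.ip (u * T.bar v) 1 := by
  rw [← T.ip_assoc, mul_one]

lemma ip_bar_bar (u v : A) : T.ip (T.bar u) (T.bar v) = T.ip u v := by
  rw [ip_eq_ip_one, T.bar_bar, mul_comm, ← ip_eq_ip_one, T.ip_symm]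

lemma ip_bar_left (u v : A) : T.ip (T.bar u) v = T.ip u (T.bar v) := by
  rw [← ip_bar_bar, T.bar_bar]

lemma expansion (v : A) : v = ∑ d ∈ T.B, T.ip v d • d := by
  have hv : v ∈ Submodule.span ℂ (T.B : Set A) := by rw [T.span_top]; trivial
  induction hv using Submodule.span_induction with
  | mem x hx =>
    rw [Finset.sum_eq_single x, T.ip_self x hx, one_smul]
    · intro d hd hdx
      rw [T.ip_ne x hx d hd hdx.symm, zero_smul]
    · exact fun h => absurd hx h
  | zero => simp
  | add x y _ _ hx hy =>
    conv_lhs => rw [hx, hy]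
    simp [add_smul, Finset.sum_add_distrib]
  | smul a x _ hx =>
    conv_lhs => rw [hx]
    simp [Finset.smul_sum, smul_smul]

lemma map_eq_sum {M : Type*} [AddCommMonoid M] [Module ℂ M] (f : A →ₗ[ℂ] M) (v : A) :
    f v = ∑ d ∈ T.B, T.ip v d • f d := by
  conv_lhs => rw [T.expansion v]
  simp

lemma ip_eq_sum (u v : A) : T.ip u v = ∑ d ∈ T.B, T.ip u d * T.ip v d := by
  rw [T.ip_symm, T.map_eq_sum (T.ip v) u]
  simp

lemma ext_ip {u v : A} (h : ∀ d ∈ T.B, T.ip u d = T.ip v d) : u = v := by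
  rw [T.expansion u, T.expansion v]
  exact Finset.sum_congr rfl fun d hd => by rw [h d hd]

/-- The eigenvector attached to the degree homomorphism. -/
noncomputable def degVector : A := ∑ d ∈ T.B, T.deg (T.bar d) • d

lemma ip_degVector {d : A} (hd : d ∈ T.B) : T.ip T.degVector d = T.deg (T.bar d) := by
  classical
  simp only [degVector, map_sum, LinearMap.sum_apply, map_smul, LinearMap.smul_apply, smul_eq_mul]
  rw [Finset.sum_eq_single d, T.ip_self d hd, mul_one]
  · intro e he hed
    rw [T.ip_ne e he d hd hed, mul_zero]
  · exact fun h => absurd hd h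

lemma ip_degVector_right (v : A) : T.ip v T.degVector = T.deg (T.bar v) := by
  have h := T.map_eq_sum (T.deg.toLinearMap.comp T.bar.toLinearMap) v
  simp only [LinearMap.comp_apply, AlgHom.toLinearMap_apply, smul_eq_mul] at h
  rw [h, T.ip_eq_sum]
  exact Finset.sum_congr rfl fun d hd => by rw [T.ip_degVector hd]

lemma mul_degVector (a : A) : a * T.degVector = T.deg a • T.degVector := by
  refine T.ext_ip fun e he => ?_
  rw [T.ip_mul_left, T.ip_symm, T.ip_degVector_right]
  simp [T.bar_bar, T.ip_degVector he]

lemma degVector_mul_bar :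
    T.degVector * T.bar T.degVector =
      (∑ d ∈ T.B, T.deg (T.bar d) * T.deg (T.bar d)) • T.bar T.degVector := by
  have h (d : A) : d * T.bar T.degVector = T.deg (T.bar d) • T.bar T.degVector := by
    have := congrArg T.bar (T.mul_degVector (T.bar d))
    simpa [T.bar_bar] using this
  conv_lhs => rw [degVector, Finset.sum_mul]
  rw [Finset.sum_smul]
  refine Finset.sum_congr rfl fun d _ => ?_
  rw [smul_mul_assoc]
  change _ • (d * T.bar T.degVector) = _
  rw [h, smul_smul]

lemma bar_degVector : T.bar T.degVector = T.degVector := by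
  have h₁ := T.degVector_mul_bar
  have h₂ : T.degVector * T.bar T.degVector =
      (∑ d ∈ T.B, T.deg (T.bar d) * T.deg (T.bar d)) • T.degVector := by
    have := congrArg T.bar h₁
    simpa [T.bar_bar, mul_comm] using this
  suffices h0 : ∑ d ∈ T.B, T.deg (T.bar d) * T.deg (T.bar d) ≠ 0 from
    smul_right_injective A h0 (h₁.symm.trans h₂)
  choose! f hf hdeg using T.deg_pos
  have : ∑ d ∈ T.B, T.deg (T.bar d) * T.deg (T.bar d) =
      ((∑ d ∈ T.B, f (T.bar d) * f (T.bar d) : ℝ) : ℂ) := by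
    push_cast
    exact Finset.sum_congr rfl fun d hd => by rw [hdeg _ (T.bar_mem d hd)]
  rw [this, Complex.ofReal_ne_zero]
  exact (Finset.sum_pos (fun d hd => mul_pos (hf _ (T.bar_mem d hd)) (hf _ (T.bar_mem d hd)))
    ⟨1, T.one_mem⟩).ne'

lemma deg_bar (v : A) : T.deg (T.bar v) = T.deg v := by
  rw [← T.ip_degVector_right v, ← T.bar_degVector, ← T.ip_bar_left, T.ip_degVector_right,
    T.bar_bar]

variable {T}

lemma ip_of_deg_ne {x y : A} (hx : x ∈ T.B) (hy : y ∈ T.B) (h : T.deg x ≠ T.deg y) :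
    T.ip x y = 0 :=
  T.ip_ne x hx y hy fun hxy => h (hxy ▸ rfl)

lemma eq_of_ip_ne_zero {x y : A} (hx : x ∈ T.B) (hy : y ∈ T.B) (h : T.ip x y ≠ 0) : x = y := by
  by_contra hxy
  exact h (T.ip_ne x hx y hy hxy)

end Form

/-- Elements of `A` whose coordinates in the basis `B` are natural numbers. -/
def IsNat (T : TAData A) (v : A) : Prop :=
  ∀ d ∈ T.B, T.ip v d ∈ (Nat.castRingHom ℂ).rangeS

namespace IsNat

variable {u v s : A}

lemma of_mem (hs : s ∈ T.B) : T.IsNat s := fun d hd => by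
  rcases eq_or_ne s d with rfl | h
  · rw [T.ip_self s hs]
    exact OneMemClass.one_mem _
  · rw [T.ip_ne s hs d hd h]
    exact zero_mem _

lemma add (hu : T.IsNat u) (hv : T.IsNat v) : T.IsNat (u + v) := fun d hd => by
  rw [map_add, LinearMap.add_apply]
  exact add_mem (hu d hd) (hv d hd)

lemma bar (hv : T.IsNat v) : T.IsNat (T.bar v) := fun d hd => by
  rw [T.ip_bar_left]
  exact hv _ (T.bar_mem d hd)

lemma ip_mem (hu : T.IsNat u) (hv : T.IsNat v) : T.ip u v ∈ (Nat.castRingHom ℂ).rangeS := by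
  rw [T.ip_eq_sum]
  exact sum_mem fun d hd => mul_mem (hu d hd) (hv d hd)

lemma ip_nat (hu : T.IsNat u) (hv : T.IsNat v) : ∃ n : ℕ, T.ip u v = n := by
  obtain ⟨n, hn⟩ := hu.ip_mem hv
  exact ⟨n, hn.symm⟩

lemma mul (hT : T.Integral) (hu : T.IsNat u) (hv : T.IsNat v) : T.IsNat (u * v) := by
  have key (a : A) (ha : a ∈ T.B) : T.IsNat (a * v) := fun d hd => by
    have h := T.map_eq_sum ((T.ip.flip d).comp (LinearMap.mulLeft ℂ a)) v
    simp only [LinearMap.comp_apply, LinearMap.mulLeft_apply, LinearMap.flip_apply,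
      smul_eq_mul] at h
    rw [h]
    refine sum_mem fun e he => mul_mem (hv e he) ?_
    obtain ⟨n, hn⟩ := hT.1 a ha e he d hd
    exact ⟨n, hn.symm⟩
  intro d hd
  have h := T.map_eq_sum ((T.ip.flip d).comp (LinearMap.mulRight ℂ v)) u
  simp only [LinearMap.comp_apply, LinearMap.mulRight_apply, LinearMap.flip_apply,
    smul_eq_mul] at h
  rw [h]
  exact sum_mem fun e he => mul_mem (hu e he) (key e he d hd)

lemma deg_nat (hT : T.Integral) (hv : T.IsNat v) : ∃ n : ℕ, T.deg v = n := by
  have h := T.map_eq_sum T.deg.toLinearMap v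
  simp only [AlgHom.toLinearMap_apply, smul_eq_mul] at h
  have : T.deg v ∈ (Nat.castRingHom ℂ).rangeS := by
    rw [h]
    refine sum_mem fun d hd => mul_mem (hv d hd) ?_
    obtain ⟨n, -, hn⟩ := hT.2 d hd
    exact ⟨n, hn.symm⟩
  obtain ⟨n, hn⟩ := this
  exact ⟨n, hn.symm⟩

/-- Remove all copies of one basis element. -/
lemma sub_smul (hv : T.IsNat v) (hs : s ∈ T.B) : T.IsNat (v - T.ip v s • s) := fun d hd => by
  rw [map_sub, LinearMap.sub_apply, map_smul, LinearMap.smul_apply]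
  by_cases h : s = d
  · rw [← h, T.ip_self s hs, smul_eq_mul, mul_one, sub_self]
    exact zero_mem _
  · rw [T.ip_ne s hs d hd h, smul_zero, sub_zero]
    exact hv d hd

/-- Remove one copy of a basis element. -/
lemma sub_mem (hv : T.IsNat v) (hs : s ∈ T.B) (h : T.ip v s ≠ 0) : T.IsNat (v - s) :=
    fun d hd => by
  rw [map_sub, LinearMap.sub_apply]
  by_cases hsd : s = d
  · subst hsd
    obtain ⟨n, hn⟩ := hv.ip_nat (of_mem hs)
    obtain ⟨k, rfl⟩ : ∃ k, n = k + 1 :=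
      Nat.exists_eq_succ_of_ne_zero fun h0 => h (by rw [hn, h0, Nat.cast_zero])
    refine ⟨k, ?_⟩
    rw [hn, T.ip_self s hs]
    simp
  · rw [T.ip_ne s hs d hd hsd, sub_zero]
    exact hv d hd

lemma exists_ip_ne_zero (h0 : v ≠ 0) : ∃ s ∈ T.B, T.ip v s ≠ 0 := by
  by_contra! h
  exact h0 (T.ext_ip fun d hd => by simp [h d hd])

lemma eq_zero_of_deg (hT : T.Integral) (hv : T.IsNat v) (h : T.deg v = 0) : v = 0 := by
  by_contra h0
  obtain ⟨s, hs, hvs⟩ := exists_ip_ne_zero (T := T) h0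
  obtain ⟨n, hn⟩ := (hv.sub_mem hs hvs).deg_nat hT
  obtain ⟨k, hk, hks⟩ := hT.2 s hs
  rw [map_sub, h, hks] at hn
  have : ((n + k : ℕ) : ℂ) = 0 := by
    push_cast
    linear_combination -hn
  norm_cast at this
  omega

lemma eq_of_sub_deg (hT : T.Integral) (h : T.IsNat (u - v)) (hd : T.deg u = T.deg v) : u = v :=
  sub_eq_zero.1 (h.eq_zero_of_deg hT (by rw [map_sub, hd, sub_self]))

lemma eq_zero_of_norm (hv : T.IsNat v) (h : T.ip v v = 0) : v = 0 := by
  by_contra h0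
  obtain ⟨s, hs, hvs⟩ := exists_ip_ne_zero (T := T) h0
  obtain ⟨n, hn⟩ := hv.ip_nat (of_mem hs)
  obtain ⟨m, hm⟩ := (hv.sub_smul hs).ip_nat (hv.sub_smul hs)
  simp only [map_sub, LinearMap.sub_apply, map_smul, LinearMap.smul_apply, smul_eq_mul,
    T.ip_symm s v, T.ip_self s hs, h, hn] at hm
  have : ((m + n * n : ℕ) : ℂ) = 0 := by
    push_cast
    linear_combination -hm
  norm_cast at this
  have : n = 0 := by nlinarith
  exact hvs (by rw [hn, this, Nat.cast_zero])

lemma mem_of_norm (hv : T.IsNat v) (h : T.ip v v = 1) : v ∈ T.B := by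
  have h0 : v ≠ 0 := by
    rintro rfl
    simp at h
  obtain ⟨s, hs, hvs⟩ := exists_ip_ne_zero (T := T) h0
  have hw := hv.sub_mem hs hvs
  obtain ⟨n, hn⟩ := hw.ip_nat (of_mem hs)
  obtain ⟨m, hm⟩ := hw.ip_nat hw
  have : ((m + 2 * n : ℕ) : ℂ) = 0 := by
    push_cast
    rw [← hm, ← hn]
    simp only [map_sub, LinearMap.sub_apply, T.ip_symm s v, T.ip_self s hs, h]
    ring
  norm_cast at this
  have hm0 : m = 0 := by omega
  rw [hm0, Nat.cast_zero] at hm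
  rwa [sub_eq_zero.1 (hw.eq_zero_of_norm hm)]

/-- An element of norm two is a sum of two distinct basis elements. -/
lemma eq_add_of_norm (hv : T.IsNat v) (h : T.ip v v = 2) :
    ∃ s ∈ T.B, ∃ t ∈ T.B, v = s + t ∧ T.ip s t = 0 := by
  have h0 : v ≠ 0 := by
    rintro rfl
    simp at h
  obtain ⟨s, hs, hvs⟩ := exists_ip_ne_zero (T := T) h0
  have hw := hv.sub_mem hs hvs
  obtain ⟨n, hn⟩ := hw.ip_nat (of_mem hs)
  obtain ⟨m, hm⟩ := hw.ip_nat hw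
  have : ((m + 2 * n : ℕ) : ℂ) = 1 := by
    push_cast
    rw [← hm, ← hn]
    simp only [map_sub, LinearMap.sub_apply, T.ip_symm s v, T.ip_self s hs, h]
    ring
  norm_cast at this
  obtain ⟨rfl, rfl⟩ : m = 1 ∧ n = 0 := by omega
  refine ⟨s, hs, v - s, hw.mem_of_norm (by simpa using hm), by ring, ?_⟩
  rw [T.ip_symm, hn, Nat.cast_zero]

/-- Two elements with inner product one share exactly one basis element. -/
lemma exists_common (hu : T.IsNat u) (hv : T.IsNat v) (h : T.ip u v = 1) :
    ∃ r ∈ T.B, T.IsNat (u - r) ∧ T.IsNat (v - r) ∧ T.ip (u - r) r = 0 ∧ T.ip (v - r) r = 0 ∧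
      T.ip (u - r) (v - r) = 0 := by
  obtain ⟨r, hr, hur⟩ : ∃ r ∈ T.B, T.ip u r * T.ip v r ≠ 0 := by
    by_contra! h0
    rw [T.ip_eq_sum, Finset.sum_eq_zero h0] at h
    exact zero_ne_one h
  have hu' := hu.sub_mem hr (left_ne_zero_of_mul hur)
  have hv' := hv.sub_mem hr (right_ne_zero_of_mul hur)
  obtain ⟨n, hn⟩ := hu'.ip_nat (of_mem hr)
  obtain ⟨m, hm⟩ := hv'.ip_nat (of_mem hr)
  obtain ⟨k, hk⟩ := hu'.ip_nat hv'
  have : ((n + m + k : ℕ) : ℂ) = 0 := by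
    push_cast
    rw [← hn, ← hm, ← hk]
    simp only [map_sub, LinearMap.sub_apply, T.ip_symm r v, T.ip_self r hr, h]
    ring
  norm_cast at this
  obtain ⟨rfl, rfl, rfl⟩ : n = 0 ∧ m = 0 ∧ k = 0 := by omega
  refine ⟨r, hr, hu', hv', ?_, ?_, ?_⟩ <;> simp_all

lemma deg_ne_of_ip_one (hT : T.Integral) (hS : T.NoSmall) (hv : T.IsNat v) (h0 : v ≠ 0)
    (h1 : T.ip v 1 = 0) : ∃ s ∈ T.B, ∃ n k : ℕ, 3 ≤ k ∧ T.IsNat (v - s) ∧ T.deg (v - s) = n ∧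
      T.deg s = k := by
  obtain ⟨s, hs, hvs⟩ := exists_ip_ne_zero (T := T) h0
  obtain ⟨n, hn⟩ := (hv.sub_mem hs hvs).deg_nat hT
  obtain ⟨k, hk, hks⟩ := hT.2 s hs
  refine ⟨s, hs, n, k, ?_, hv.sub_mem hs hvs, hn, hks⟩
  by_contra! h3
  obtain rfl | rfl : k = 1 ∨ k = 2 := by omega
  · rw [hS.1 s hs (by simpa using hks)] at hvs
    exact hvs h1
  · exact hS.2 s hs (by simpa using hks)

/-- An element without the unit as constituent has degree zero or at least three. -/
lemma three_le_deg (hT : T.Integral) (hS : T.NoSmall) (hv : T.IsNat v) (h1 : T.ip v 1 = 0)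
    {n : ℕ} (hn : T.deg v = n) (h0 : n ≠ 0) : 3 ≤ n := by
  have hv0 : v ≠ 0 := by
    rintro rfl
    rw [map_zero] at hn
    exact h0 (by exact_mod_cast hn.symm)
  obtain ⟨s, -, m, k, hk, -, hm, hks⟩ := hv.deg_ne_of_ip_one hT hS hv0 h1
  have : ((m + k : ℕ) : ℂ) = n := by
    push_cast
    rw [← hm, ← hks, ← hn, map_sub]
    ring
  norm_cast at this
  omega

lemma mem_of_deg_three (hT : T.Integral) (hS : T.NoSmall) (hv : T.IsNat v) (h1 : T.ip v 1 = 0)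
    (h3 : T.deg v = 3) : v ∈ T.B := by
  have hv0 : v ≠ 0 := by
    rintro rfl
    simp at h3
  obtain ⟨s, hs, m, k, hk, hvs, hm, hks⟩ := hv.deg_ne_of_ip_one hT hS hv0 h1
  have : ((m + k : ℕ) : ℂ) = 3 := by
    push_cast
    rw [← hm, ← hks, ← h3, map_sub]
    ring
  norm_cast at this
  obtain ⟨rfl, rfl⟩ : m = 0 ∧ k = 3 := by omega
  rwa [sub_eq_zero.1 (hvs.eq_zero_of_deg hT (by simpa using hm))]

end IsNat

/-- The part of the multiplication table surrounding `b` that is forced by the hypotheses, up to the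
real elements `y9` and `y15`. -/
structure Setup (T : TAData A) (b c b6 b8 x6 x9 x10 x15 y9 y15 : A) : Prop where
  integral : T.Integral
  noSmall : T.NoSmall
  b_mem : b ∈ T.B
  c_mem : c ∈ T.B
  b6_mem : b6 ∈ T.B
  b8_mem : b8 ∈ T.B
  x6_mem : x6 ∈ T.B
  x9_mem : x9 ∈ T.B
  x10_mem : x10 ∈ T.B
  x15_mem : x15 ∈ T.B
  y9_mem : y9 ∈ T.B
  y15_mem : y15 ∈ T.B
  deg_b : T.deg b = 3
  deg_c : T.deg c = 3
  deg_b6 : T.deg b6 = 6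
  deg_b8 : T.deg b8 = 8
  deg_x6 : T.deg x6 = 6
  deg_x9 : T.deg x9 = 9
  deg_x10 : T.deg x10 = 10
  deg_x15 : T.deg x15 = 15
  deg_y9 : T.deg y9 = 9
  deg_y15 : T.deg y15 = 15
  bar_c : T.bar c = c
  bar_b6 : T.bar b6 = b6
  bar_b8 : T.bar b8 = b8
  bar_x10 : T.bar x10 = x10
  bar_y9 : T.bar y9 = y9
  bar_y15 : T.bar y15 = y15
  bar_mul_b : T.bar b * b = 1 + b8
  b_mul_b : b * b = c + b6
  c_mul_bar : c * T.bar b = b + x6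
  b6_mul_bar : b6 * T.bar b = b + x15
  x6_mul_bar : x6 * T.bar b = b8 + x10
  x10_mul_b : x10 * b = x15 + x6 + x9
  c_mul_c : c * c = 1 + b8
  c_mul_b8 : c * b8 = c + b6 + y15
  c_mul_x10 : c * x10 = b6 + y15 + y9

lemma exists_setup (hInt : T.Integral) (hSmall : T.NoSmall) {b c b6 b8 x6 x9 x10 x15 : A}
    (hb : b ∈ T.B) (hdb : T.deg b = 3) (hb8 : b8 ∈ T.B) (hd8 : T.deg b8 = 8)
    (hmul : T.bar b * b = 1 + b8) (hc : c ∈ T.B) (hdc : T.deg c = 3) (hcr : T.bar c = c)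
    (hb6 : b6 ∈ T.B) (hd6 : T.deg b6 = 6) (hsq : b * b = c + b6)
    (hx6 : x6 ∈ T.B) (hdx6 : T.deg x6 = 6) (hcb : c * T.bar b = b + x6)
    (hx15 : x15 ∈ T.B) (hdx15 : T.deg x15 = 15) (hb6b : b6 * T.bar b = b + x15)
    (hx10 : x10 ∈ T.B) (hdx10 : T.deg x10 = 10) (hx10r : T.bar x10 = x10)
    (hx6b : x6 * T.bar b = b8 + x10) (hx9 : x9 ∈ T.B) (hdx9 : T.deg x9 = 9)
    (hx10b : x10 * b = x15 + x6 + x9) :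
    ∃ y9 y15, T.Setup b c b6 b8 x6 x9 x10 x15 y9 y15 := by
  have h8r : T.bar b8 = b8 := by
    have := congrArg T.bar hmul
    simp only [map_mul, map_add, map_one, T.bar_bar] at this
    linear_combination -this + hmul
  have hcb' : c * b = T.bar b + T.bar x6 := by
    simpa [T.bar_bar, hcr] using congrArg T.bar hcb
  have hx6b' : T.bar x6 * b = b8 + x10 := by
    simpa [T.bar_bar, h8r, hx10r] using congrArg T.bar hx6b
  have hb8b : b * b8 = b + x6 + x15 := by
    linear_combination (-b) * hmul + T.bar b * hsq + hcb + hb6b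
  have ips {x y : A} (hx : x ∈ T.B) (hy : y ∈ T.B) (h : T.deg x ≠ T.deg y) : T.ip x y = 0 :=
    ip_of_deg_ne hx hy h
  have nc : T.IsNat c := .of_mem hc
  have h1 := T.one_mem
  have d1 : T.deg 1 = 1 := map_one _
  have hcc : c * c = 1 + b8 := by
    have e1 : T.ip (c * c) 1 = 1 := by
      rw [T.ip_mul_left, hcr, mul_one, T.ip_self c hc]
    have e2 : T.ip (c * c) b8 = 1 := by
      have e : T.ip (c * c) (T.bar b * b) = 2 := by
        rw [← T.ip_mul_left, ← mul_assoc, mul_comm, T.ip_mul_left, hcr, mul_comm b, hcb']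
        simp [*, T.deg_bar, T.bar_mem, T.ip_self]
        norm_num
      rw [hmul, map_add, e1] at e
      linear_combination e
    have e3 := ((nc.mul hInt nc).sub_mem h1 (by rw [e1]; exact one_ne_zero)).sub_mem hb8 (by
      rw [map_sub, LinearMap.sub_apply, e2, ips h1 hb8 (by norm_num [*])]; norm_num)
    rw [sub_sub] at e3
    exact e3.eq_of_sub_deg hInt (by norm_num [*])
  have hcb6 : c * b6 = b8 + x10 := by
    linear_combination (-c) * hsq + b * hcb' + hmul + hx6b' - hcc
  have hK (u v : A) : T.ip (c * u) (c * v) = T.ip (b * u) (b * v) := by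
    rw [T.ip_mul_left, T.ip_mul_left, hcr, ← mul_assoc, ← mul_assoc, hmul, hcc]
  have hx15c : T.deg (T.bar x15) = 15 := by rw [T.deg_bar, hdx15]
  -- the constituent of degree 15 in `c * b8`
  have n1 : T.ip (c * b8) (c * b8) = 3 := by
    rw [hK, hb8b]
    simp [ips hb hx6 (by norm_num [*]), ips hx6 hb (by norm_num [*]), ips hb hx15 (by norm_num [*]),
      ips hx15 hb (by norm_num [*]), ips hx6 hx15 (by norm_num [*]),
      ips hx15 hx6 (by norm_num [*]), T.ip_self, *]
    norm_num
  have n2 : T.ip (c * b8) c = 1 := by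
    rw [T.ip_mul_left, hcr, hcc, map_add, ips hb8 h1 (by norm_num [*]), T.ip_self _ hb8, zero_add]
  have n3 : T.ip (c * b8) b6 = 1 := by
    rw [T.ip_mul_left, hcr, hcb6, map_add, ips hb8 hx10 (by norm_num [*]), T.ip_self _ hb8,
      add_zero]
  have hb6' := T.bar_mem _ hb6
  have hdb6' : T.deg (T.bar b6) = 6 := by rw [T.deg_bar, hd6]
  have n4 : T.ip (c * b8) (T.bar b6) = 1 := by
    rw [← T.ip_bar_left, map_mul, hcr, h8r, n3]
  have nat1 : T.IsNat (c * b8 - c - b6) :=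
    ((nc.mul hInt (.of_mem hb8)).sub_mem hc (by rw [n2]; exact one_ne_zero)).sub_mem hb6 (by
      rw [map_sub, LinearMap.sub_apply, n3, ips hc hb6 (by norm_num [*])]; norm_num)
  have hy15 : c * b8 - c - b6 ∈ T.B := nat1.mem_of_norm (by
    simp only [map_sub, LinearMap.sub_apply, n1, n2, n3, T.ip_symm c (c * b8),
      T.ip_symm b6 (c * b8), T.ip_self _ hc, T.ip_self _ hb6, ips hc hb6 (by norm_num [*]),
      ips hb6 hc (by norm_num [*])]
    norm_num)
  have hdy15 : T.deg (c * b8 - c - b6) = 15 := by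
    simp only [map_sub, map_mul, *]
    norm_num
  have hb6r : T.bar b6 = b6 := by
    by_contra hne
    have := ips hy15 hb6' (by rw [hdy15, hdb6']; norm_num)
    rw [map_sub, map_sub, LinearMap.sub_apply, LinearMap.sub_apply, n4,
      ips hc hb6' (by rw [hdc, hdb6']; norm_num), T.ip_ne b6 hb6 _ hb6' (Ne.symm hne)] at this
    norm_num at this
  obtain ⟨y15, e15⟩ : ∃ y15, y15 = c * b8 - c - b6 := ⟨_, rfl⟩
  rw [← e15] at hy15 hdy15
  have hx6bb : x6 * b = c + y15 := by
    linear_combination (-b) * hcb + c * hmul - hsq - e15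
  have hcy15 : c * y15 = T.bar b * x15 := by
    linear_combination c * e15 + b8 * hcc - hcc - hcb6 + T.bar b * hb8b - b8 * hmul + hmul + hx6b
  -- the constituent of degree 9 in `c * x10`
  have m1 : T.ip (c * x10) (c * x10) = 3 := by
    rw [hK, mul_comm b, hx10b]
    simp [ips hx9 hx6 (by norm_num [*]), ips hx6 hx9 (by norm_num [*]),
      ips hx9 hx15 (by norm_num [*]), ips hx15 hx9 (by norm_num [*]),
      ips hx6 hx15 (by norm_num [*]), ips hx15 hx6 (by norm_num [*]), T.ip_self, *]
    norm_num
  have m2 : T.ip (c * x10) b6 = 1 := by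
    rw [T.ip_mul_left, hcr, hcb6, map_add, ips hx10 hb8 (by norm_num [*]), T.ip_self _ hx10,
      zero_add]
  have m3 : T.ip (c * x10) y15 = 1 := by
    rw [T.ip_mul_left, hcr, hcy15, ← T.ip_mul_left, mul_comm, hx10b]
    simp [ips hx9 hx15 (by norm_num [*]), ips hx6 hx15 (by norm_num [*]), T.ip_self, *]
  have nat2 : T.IsNat (c * x10 - b6 - y15) :=
    ((nc.mul hInt (.of_mem hx10)).sub_mem hb6 (by rw [m2]; exact one_ne_zero)).sub_mem hy15 (by
      rw [map_sub, LinearMap.sub_apply, m3, ips hb6 hy15 (by norm_num [*])]; norm_num)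
  have hy9 : c * x10 - b6 - y15 ∈ T.B := nat2.mem_of_norm (by
    simp only [map_sub, LinearMap.sub_apply, m1, m2, m3, T.ip_symm b6 (c * x10),
      T.ip_symm y15 (c * x10), T.ip_self _ hb6, T.ip_self _ hy15, ips hb6 hy15 (by norm_num [*]),
      ips hy15 hb6 (by norm_num [*])]
    norm_num)
  have hy15r : T.bar y15 = y15 := by
    rw [e15]
    simp only [map_sub, map_mul, hcr, h8r, hb6r]
  refine ⟨c * x10 - b6 - y15, y15, hInt, hSmall, hb, hc, hb6, hb8, hx6, hx9, hx10, hx15, hy9, hy15,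
    hdb, hdc, hd6, hd8, hdx6, hdx9, hdx10, hdx15, ?_, hdy15, hcr, hb6r, h8r, hx10r, ?_, hy15r,
    hmul, hsq, hcb, hb6b, hx6b, hx10b, hcc, ?_, ?_⟩
  · simp only [map_sub, map_mul, *]
    norm_num
  · simp only [map_sub, map_mul, hcr, hx10r, hb6r, hy15r]
  · linear_combination -e15
  · ring

namespace IsNat

variable {u v s : A}

lemma ip_eq_zero (hu : T.IsNat u) (hv : T.IsNat v) (hs : T.IsNat s) (h : T.ip (u + v) s = 0) :
    T.ip u s = 0 ∧ T.ip v s = 0 := by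
  obtain ⟨m, hm⟩ := hu.ip_nat hs
  obtain ⟨n, hn⟩ := hv.ip_nat hs
  rw [map_add, LinearMap.add_apply, hm, hn] at h
  have : m + n = 0 := by exact_mod_cast h
  rw [hm, hn]
  obtain ⟨rfl, rfl⟩ : m = 0 ∧ n = 0 := by omega
  simp

end IsNat

namespace Setup

variable {b c b6 b8 x6 x9 x10 x15 y9 y15 : A}
  (S : T.Setup b c b6 b8 x6 x9 x10 x15 y9 y15)
include S

lemma c_mul_b : c * b = T.bar b + T.bar x6 := by
  simpa [T.bar_bar, S.bar_c] using congrArg T.bar S.c_mul_bar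

lemma b6_mul_b : b6 * b = T.bar b + T.bar x15 := by
  simpa [T.bar_bar, S.bar_b6] using congrArg T.bar S.b6_mul_bar

lemma bar_x6_mul_b : T.bar x6 * b = b8 + x10 := by
  simpa [T.bar_bar, S.bar_b8, S.bar_x10] using congrArg T.bar S.x6_mul_bar

lemma x10_mul_bar : x10 * T.bar b = T.bar x15 + T.bar x6 + T.bar x9 := by
  simpa [T.bar_bar, S.bar_x10] using congrArg T.bar S.x10_mul_b

lemma b_mul_b8 : b * b8 = b + x6 + x15 := by
  linear_combination (-b) * S.bar_mul_b + T.bar b * S.b_mul_b + S.c_mul_bar + S.b6_mul_bar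

lemma bar_mul_b8 : T.bar b * b8 = T.bar b + T.bar x6 + T.bar x15 := by
  simpa [S.bar_b8] using congrArg T.bar S.b_mul_b8

lemma c_mul_b6 : c * b6 = b8 + x10 := by
  linear_combination (-c) * S.b_mul_b + b * S.c_mul_b + S.bar_mul_b + S.bar_x6_mul_b - S.c_mul_c

lemma x6_mul_b : x6 * b = c + y15 := by
  linear_combination (-b) * S.c_mul_bar + c * S.bar_mul_b - S.b_mul_b + S.c_mul_b8

lemma c_mul_x6 : c * x6 = T.bar b + T.bar x15 := by
  linear_combination (-c) * S.c_mul_bar + T.bar b * S.c_mul_c + S.bar_mul_b8 - S.c_mul_b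

lemma b8_mul_b6 : b8 * b6 = c + b6 + 2 * y15 + y9 := by
  linear_combination (-b6) * S.c_mul_c + c * S.c_mul_b6 + S.c_mul_b8 + S.c_mul_x10

lemma c_mul_y15 : c * y15 = T.bar b * x15 := by
  linear_combination (-c) * S.c_mul_b8 + b8 * S.c_mul_c - S.c_mul_c - S.c_mul_b6 +
    T.bar b * S.b_mul_b8 - b8 * S.bar_mul_b + S.bar_mul_b + S.x6_mul_bar

lemma b_mul_x15 : b * x15 = b6 + 2 * y15 + y9 := by
  linear_combination (-b) * S.b6_mul_bar + b6 * S.bar_mul_b + S.b8_mul_b6 - S.b_mul_b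

lemma c_mul_x15 : c * x15 = T.bar x6 + 2 * T.bar x15 + T.bar x9 := by
  linear_combination (-c) * S.b6_mul_bar + T.bar b * S.c_mul_b6 + S.bar_mul_b8 + S.x10_mul_bar -
    S.c_mul_b

lemma c_mul_bar_x15 : c * T.bar x15 = x6 + 2 * x15 + x9 := by
  simpa [T.bar_bar, S.bar_c, map_ofNat] using congrArg T.bar S.c_mul_x15

lemma b_mul_y15 : b * y15 = T.bar x6 + 2 * T.bar x15 + T.bar x9 := by
  linear_combination S.c_mul_x15 + c * S.b_mul_b8 - b * S.c_mul_b8 - S.b6_mul_b + S.c_mul_x6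

lemma bar_mul_y15 : T.bar b * y15 = x6 + 2 * x15 + x9 := by
  simpa [T.bar_bar, S.bar_y15, map_ofNat] using congrArg T.bar S.b_mul_y15

lemma c_mul_x9 : c * x9 = b * y9 := by
  linear_combination (-c) * S.x10_mul_b + b * S.c_mul_x10 + S.b_mul_y15 - S.c_mul_x15 - S.c_mul_x6 +
    S.b6_mul_b

lemma c_mul_bar_x9 : c * T.bar x9 = T.bar b * y9 := by
  simpa [S.bar_c, S.bar_y9] using congrArg T.bar S.c_mul_x9

lemma c_mul_y9 : c * y9 = T.bar b * x9 := by
  linear_combination (-c) * S.c_mul_x10 + x10 * S.c_mul_c - S.c_mul_b6 - S.c_mul_y15 +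
    T.bar b * S.x10_mul_b - x10 * S.bar_mul_b + S.x6_mul_bar

lemma b_mul_bar_x9 : b * T.bar x9 = T.bar b * x9 := by
  have := congrArg T.bar S.c_mul_y9
  simp only [map_mul, T.bar_bar, S.bar_c, S.bar_y9] at this
  rw [← this, S.c_mul_y9]

lemma b_mul_bar_x15 : b * T.bar x15 = T.bar b * x15 := by
  have := congrArg T.bar S.c_mul_y15
  simp only [map_mul, T.bar_bar, S.bar_c, S.bar_y15] at this
  rw [← this, S.c_mul_y15]

lemma ip_c_mul (u v : A) : T.ip (c * u) v = T.ip u (c * v) := by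
  rw [T.ip_mul_left, S.bar_c]

lemma ip_b_mul_b_mul (u v : A) : T.ip (b * u) (b * v) = T.ip (c * u) (c * v) := by
  rw [T.ip_mul_left, S.ip_c_mul, ← mul_assoc, ← mul_assoc, S.bar_mul_b, S.c_mul_c]

lemma ip_bar_mul_bar_mul (u v : A) :
    T.ip (T.bar b * u) (T.bar b * v) = T.ip (c * u) (c * v) := by
  rw [T.ip_bar_mul, S.ip_c_mul, ← mul_assoc, ← mul_assoc, mul_comm b, S.bar_mul_b, S.c_mul_c]

lemma ip_bar_mul_y9_x6 : T.ip (T.bar b * y9) x6 = 0 := by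
  rw [T.ip_bar_mul, mul_comm, S.x6_mul_b, map_add,
    ip_of_deg_ne S.y9_mem S.c_mem (by norm_num [S.deg_y9, S.deg_c]),
    ip_of_deg_ne S.y9_mem S.y15_mem (by norm_num [S.deg_y9, S.deg_y15]), add_zero]

lemma ip_bar_mul_y9_x15 : T.ip (T.bar b * y9) x15 = 1 := by
  rw [T.ip_bar_mul, S.b_mul_x15, map_add, map_add, two_mul, map_add, T.ip_self _ S.y9_mem,
    ip_of_deg_ne S.y9_mem S.b6_mem (by norm_num [S.deg_y9, S.deg_b6]),
    ip_of_deg_ne S.y9_mem S.y15_mem (by norm_num [S.deg_y9, S.deg_y15]), zero_add, zero_add,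
    zero_add]

lemma ip_bar_mul_y9_one : T.ip (T.bar b * y9) 1 = 0 := by
  rw [T.ip_bar_mul, mul_one, ip_of_deg_ne S.y9_mem S.b_mem (by norm_num [S.deg_y9, S.deg_b])]

lemma ip_bar_mul_x9_b8 : T.ip (T.bar b * x9) b8 = 0 := by
  rw [T.ip_bar_mul, S.b_mul_b8, map_add, map_add,
    ip_of_deg_ne S.x9_mem S.b_mem (by norm_num [S.deg_x9, S.deg_b]),
    ip_of_deg_ne S.x9_mem S.x6_mem (by norm_num [S.deg_x9, S.deg_x6]),
    ip_of_deg_ne S.x9_mem S.x15_mem (by norm_num [S.deg_x9, S.deg_x15]), add_zero, add_zero]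

lemma ip_bar_mul_x9_x10 : T.ip (T.bar b * x9) x10 = 1 := by
  rw [T.ip_bar_mul, mul_comm, S.x10_mul_b, map_add, map_add, T.ip_self _ S.x9_mem,
    ip_of_deg_ne S.x9_mem S.x6_mem (by norm_num [S.deg_x9, S.deg_x6]),
    ip_of_deg_ne S.x9_mem S.x15_mem (by norm_num [S.deg_x9, S.deg_x15]), zero_add, zero_add]

lemma ip_bar_mul_x9_one : T.ip (T.bar b * x9) 1 = 0 := by
  rw [T.ip_bar_mul, mul_one, ip_of_deg_ne S.x9_mem S.b_mem (by norm_num [S.deg_x9, S.deg_b])]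

lemma ip_bar_mul_x15_b8 : T.ip (T.bar b * x15) b8 = 1 := by
  rw [T.ip_bar_mul, S.b_mul_b8, map_add, map_add, T.ip_self _ S.x15_mem,
    ip_of_deg_ne S.x15_mem S.b_mem (by norm_num [S.deg_x15, S.deg_b]),
    ip_of_deg_ne S.x15_mem S.x6_mem (by norm_num [S.deg_x15, S.deg_x6]), zero_add, zero_add]

lemma ip_bar_mul_x15_x10 : T.ip (T.bar b * x15) x10 = 1 := by
  rw [T.ip_bar_mul, mul_comm, S.x10_mul_b, map_add, map_add, T.ip_self _ S.x15_mem,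
    ip_of_deg_ne S.x15_mem S.x6_mem (by norm_num [S.deg_x15, S.deg_x6]),
    ip_of_deg_ne S.x15_mem S.x9_mem (by norm_num [S.deg_x15, S.deg_x9]), add_zero, add_zero]

lemma ip_bar_mul_x15_one : T.ip (T.bar b * x15) 1 = 0 := by
  rw [T.ip_bar_mul, mul_one, ip_of_deg_ne S.x15_mem S.b_mem (by norm_num [S.deg_x15, S.deg_b])]

lemma ip_bar_mul_x15_self : T.ip (T.bar b * x15) (T.bar b * x15) = 6 := by
  rw [S.ip_bar_mul_bar_mul, ← S.ip_b_mul_b_mul, S.b_mul_x15]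
  have h1 := ip_of_deg_ne S.b6_mem S.y15_mem (by norm_num [S.deg_b6, S.deg_y15])
  have h2 := ip_of_deg_ne S.y9_mem S.y15_mem (by norm_num [S.deg_y9, S.deg_y15])
  have h3 := ip_of_deg_ne S.b6_mem S.y9_mem (by norm_num [S.deg_b6, S.deg_y9])
  simp only [two_mul, map_add, LinearMap.add_apply, h1, h2, h3, T.ip_symm y15 b6, T.ip_symm y15 y9,
    T.ip_symm y9 b6, T.ip_self _ S.b6_mem, T.ip_self _ S.y9_mem, T.ip_self _ S.y15_mem]
  norm_num

lemma isNat_bar_mul_y9_sub : T.IsNat (T.bar b * y9 - x15) :=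
  (((IsNat.of_mem S.b_mem).bar.mul S.integral (.of_mem S.y9_mem))).sub_mem S.x15_mem (by
    rw [S.ip_bar_mul_y9_x15]; exact one_ne_zero)

/-- What remains of `bar b * x15` after removing the constituents `b8` and `x10`. -/
lemma isNat_bar_mul_x15_sub : T.IsNat (T.bar b * x15 - b8 - x10) :=
  (((IsNat.of_mem S.b_mem).bar.mul S.integral (.of_mem S.x15_mem)).sub_mem S.b8_mem (by
    rw [S.ip_bar_mul_x15_b8]; exact one_ne_zero)).sub_mem S.x10_mem (by
    rw [map_sub, LinearMap.sub_apply, S.ip_bar_mul_x15_x10,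
      ip_of_deg_ne S.b8_mem S.x10_mem (by norm_num [S.deg_b8, S.deg_x10]), sub_zero]
    exact one_ne_zero)

lemma x15_mul_b8 :
    x15 * b8 = b + 2 * x6 + 5 * x15 + 2 * x9 + (T.bar b * y9 - x15) := by
  linear_combination (-x15) * S.bar_mul_b + T.bar b * S.b_mul_x15 + 2 * S.bar_mul_y15 +
    S.b6_mul_bar

/-- The inner product of `bar b * x9` and `bar b * x15`. -/
lemma ip_bar_mul_x9_bar_mul_x15 :
    T.ip (T.bar b * x9) (T.bar b * x15) = 2 + T.ip (T.bar b * y9 - x15) x9 := by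
  rw [T.ip_bar_mul, ← mul_assoc, mul_comm b, S.bar_mul_b, add_mul, one_mul, mul_comm b8,
    S.x15_mul_b8, T.ip_symm _ x9]
  have h1 := ip_of_deg_ne S.x9_mem S.b_mem (by norm_num [S.deg_x9, S.deg_b])
  have h2 := ip_of_deg_ne S.x9_mem S.x6_mem (by norm_num [S.deg_x9, S.deg_x6])
  have h3 := ip_of_deg_ne S.x9_mem S.x15_mem (by norm_num [S.deg_x9, S.deg_x15])
  have e : x15 + (b + 2 * x6 + 5 * x15 + 2 * x9 + (T.bar b * y9 - x15)) =
      b + (x6 + x6) + (x15 + x15 + x15 + x15 + x15 + x15) + (x9 + x9) +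
        (T.bar b * y9 - x15) := by ring
  rw [e]
  simp only [map_add, h1, h2, h3, T.ip_self _ S.x9_mem]
  ring

lemma ip_bar_mul_x9_self :
    T.ip (T.bar b * x9) (T.bar b * x9) = T.ip (T.bar b * y9) (T.bar b * y9) := by
  rw [S.ip_bar_mul_bar_mul, ← T.ip_bar_bar, map_mul T.bar, S.bar_c, S.c_mul_bar_x9]

/-- If `x9` is not a constituent of `bar b * y9`, then `bar b * x9` and `bar b * y9` each have three
constituents, one of which, `f`, controls the remaining multiplication. -/
lemma exists_of_ip_eq_zero {w : A} (hw : w = T.bar b * y9 - x15) (h : T.ip w x9 = 0) :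
    ∃ f ∈ T.B, ∃ P q : A, T.IsNat P ∧ T.IsNat q ∧ T.deg q = 6 ∧
      T.deg P = 3 * T.deg f - 15 ∧ b * f = x9 + P + q ∧ T.ip w w = 2 ∧
      c * T.bar w = 2 * x9 + w + q ∧ T.ip (b * f) x9 = 1 ∧ T.ip (b * f) x15 = 0 ∧
      T.ip (b * f) b = 0 := by
  have hI := S.integral
  have nw : T.IsNat w := hw ▸ S.isNat_bar_mul_y9_sub
  have nb : T.IsNat b := .of_mem S.b_mem
  have n1 : T.IsNat (1 : A) := .of_mem T.one_mem
  have n6 : T.IsNat x6 := .of_mem S.x6_mem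
  have n8 : T.IsNat b8 := .of_mem S.b8_mem
  have n9 : T.IsNat x9 := .of_mem S.x9_mem
  have n10 : T.IsNat x10 := .of_mem S.x10_mem
  have n15 : T.IsNat x15 := .of_mem S.x15_mem
  have i69 := ip_of_deg_ne S.x6_mem S.x9_mem (by norm_num [S.deg_x6, S.deg_x9])
  have i6f := ip_of_deg_ne S.x6_mem S.x15_mem (by norm_num [S.deg_x6, S.deg_x15])
  have i9f := ip_of_deg_ne S.x9_mem S.x15_mem (by norm_num [S.deg_x9, S.deg_x15])
  have i80 := ip_of_deg_ne S.b8_mem S.x10_mem (by norm_num [S.deg_b8, S.deg_x10])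
  have i96 : T.ip x9 x6 = 0 := by rw [T.ip_symm, i69]
  have if6 : T.ip x15 x6 = 0 := by rw [T.ip_symm, i6f]
  have if9 : T.ip x15 x9 = 0 := by rw [T.ip_symm, i9f]
  have i08 : T.ip x10 b8 = 0 := by rw [T.ip_symm, i80]
  have i99 := T.ip_self _ S.x9_mem
  have iff := T.ip_self _ S.x15_mem
  have i88 := T.ip_self _ S.b8_mem
  have i00 := T.ip_self _ S.x10_mem
  have w6 : T.ip w x6 = 0 := by
    rw [hw, map_sub, LinearMap.sub_apply, S.ip_bar_mul_y9_x6, if6, sub_zero]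
  have wf : T.ip w x15 = 0 := by
    rw [hw, map_sub, LinearMap.sub_apply, S.ip_bar_mul_y9_x15, iff, sub_self]
  have exf : T.ip (T.bar b * x9) (T.bar b * x15) = 2 := by
    rw [S.ip_bar_mul_x9_bar_mul_x15, ← hw, h, add_zero]
  obtain ⟨u, hu⟩ : ∃ u, u = T.bar b * x9 - x10 := ⟨_, rfl⟩
  have nu : T.IsNat u := hu ▸ (nb.bar.mul hI n9).sub_mem S.x10_mem (by
    rw [S.ip_bar_mul_x9_x10]; exact one_ne_zero)
  obtain ⟨R, hR⟩ : ∃ R, R = T.bar b * x15 - b8 - x10 := ⟨_, rfl⟩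
  have nR : T.IsNat R := hR ▸ S.isNat_bar_mul_x15_sub
  have R8 : T.ip R b8 = 0 := by
    rw [hR]
    simp only [map_sub, LinearMap.sub_apply, S.ip_bar_mul_x15_b8, i88, i08]
    norm_num
  have R0 : T.ip R x10 = 0 := by
    rw [hR]
    simp only [map_sub, LinearMap.sub_apply, S.ip_bar_mul_x15_x10, i00, i80]
    norm_num
  have eR : T.bar b * x15 = R + b8 + x10 := by linear_combination -hR
  have eu : T.bar b * x9 = u + x10 := by linear_combination -hu
  have u8 : T.ip u b8 = 0 := by
    rw [hu, map_sub, LinearMap.sub_apply, S.ip_bar_mul_x9_b8, i08, sub_zero]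
  have u0 : T.ip u x10 = 0 := by
    rw [hu, map_sub, LinearMap.sub_apply, S.ip_bar_mul_x9_x10, i00, sub_self]
  have u1 : T.ip u 1 = 0 := by
    rw [hu, map_sub, LinearMap.sub_apply, S.ip_bar_mul_x9_one,
      ip_of_deg_ne S.x10_mem T.one_mem (by norm_num [S.deg_x10]), sub_zero]
  have uR : T.ip u R = 1 := by
    rw [eu, eR] at exf
    simp only [map_add, LinearMap.add_apply, u8, u0, i08, i00, T.ip_symm x10 R, R0] at exf
    linear_combination exf
  have RR : T.ip R R = 4 := by
    have := S.ip_bar_mul_x15_self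
    rw [eR] at this
    simp only [map_add, LinearMap.add_apply, i08, i00, i80, i88, T.ip_symm x10 R,
      T.ip_symm b8 R, R0, R8] at this
    linear_combination this
  obtain ⟨r, hr, nF, nV, Fr, Vr, FV⟩ := nu.exists_common nR uR
  obtain ⟨F, hF⟩ : ∃ F, F = u - r := ⟨_, rfl⟩
  obtain ⟨V, hV⟩ : ∃ V, V = R - r := ⟨_, rfl⟩
  rw [← hF] at nF Fr FV
  rw [← hV] at nV Vr FV
  have nr : T.IsNat r := .of_mem hr
  obtain rfl : u = r + F := by linear_combination -hF
  obtain rfl : R = r + V := by linear_combination -hV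
  have rr := T.ip_self _ hr
  obtain ⟨r8, F8⟩ := nr.ip_eq_zero nF n8 u8
  obtain ⟨r0, F0⟩ := nr.ip_eq_zero nF n10 u0
  obtain ⟨-, F1⟩ := nr.ip_eq_zero nF n1 u1
  obtain ⟨-, V8⟩ := nr.ip_eq_zero nV n8 R8
  obtain ⟨-, V0⟩ := nr.ip_eq_zero nV n10 R0
  have rV : T.ip r V = 0 := by rw [T.ip_symm, Vr]
  have VV : T.ip V V = 3 := by
    simp only [map_add, LinearMap.add_apply, Vr, rV, rr] at RR
    linear_combination RR
  have brf : T.ip (b * r) x15 = 1 := by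
    rw [T.ip_mul_left, eR]
    simp only [map_add, rr, rV, r8, r0]
    norm_num
  have br9 : T.ip (b * r) x9 = 1 := by
    rw [T.ip_mul_left, eu]
    simp only [map_add, rr, T.ip_symm r F, Fr, r0]
    norm_num
  obtain ⟨E, hE⟩ : ∃ E, E = b * r - x15 - x9 := ⟨_, rfl⟩
  have nE : T.IsNat E := hE ▸ ((nb.mul hI nr).sub_mem S.x15_mem (by
    rw [brf]; exact one_ne_zero)).sub_mem S.x9_mem (by
    rw [map_sub, LinearMap.sub_apply, br9, if9, sub_zero]; exact one_ne_zero)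
  have bVf : T.ip (b * V) x15 = 3 := by
    rw [T.ip_mul_left, eR]
    simp only [map_add, VV, Vr, V8, V0]
    norm_num
  obtain ⟨P, hP⟩ : ∃ P, P = b * V - (3 : ℂ) • x15 := ⟨_, rfl⟩
  have nP : T.IsNat P := by
    rw [hP, ← bVf]
    exact (nb.mul hI nV).sub_smul S.x15_mem
  replace hP : P = b * V - 3 * x15 := by
    rw [hP, Algebra.smul_def, map_ofNat]
  obtain rfl : w = P + E := by
    linear_combination hw - hP - hE + b * eR - x15 * S.bar_mul_b - S.x15_mul_b8 + S.b_mul_b8 +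
      S.x10_mul_b
  obtain ⟨P6, E6⟩ := nP.ip_eq_zero nE n6 w6
  obtain ⟨P9, E9⟩ := nP.ip_eq_zero nE n9 h
  obtain ⟨Pf, Ef⟩ := nP.ip_eq_zero nE n15 wf
  have nbF := nb.mul hI nF
  obtain ⟨n, hn⟩ := nF.ip_nat nF
  have bF9 : T.ip (b * F) x9 = n := by
    rw [T.ip_mul_left, eu]
    simp only [map_add, Fr, hn, F0, zero_add, add_zero]
  obtain ⟨U, hU⟩ : ∃ U, U = b6 * T.bar x9 := ⟨_, rfl⟩
  have nU : T.IsNat U := hU ▸ (IsNat.of_mem S.b6_mem).mul hI n9.bar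
  replace hU : U = x6 + x15 + 2 * x9 + b * F - P := by
    linear_combination hU - T.bar x9 * S.b_mul_b + b * S.b_mul_bar_x9 - S.c_mul_bar_x9 + hw +
      b * eu + S.x10_mul_b - hE
  have U6 : T.ip U x6 = 1 + T.ip (b * F) x6 := by
    rw [hU]
    simp only [two_mul, map_add, map_sub, LinearMap.add_apply, LinearMap.sub_apply,
      T.ip_self _ S.x6_mem, i96, if6, P6]
    ring
  have Uf : T.ip U x15 = 1 + T.ip (b * F) x15 := by
    rw [hU]
    simp only [two_mul, map_add, map_sub, LinearMap.add_apply, LinearMap.sub_apply,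
      iff, i9f, i6f, Pf]
    ring
  have U9 : T.ip U x9 = 2 + n := by
    rw [hU]
    simp only [two_mul, map_add, map_sub, LinearMap.add_apply, LinearMap.sub_apply,
      i99, if9, i69, P9, bF9]
    ring
  have nq := (nU.sub_mem S.x6_mem (by
    obtain ⟨k, hk⟩ := nbF.ip_nat n6
    rw [U6, hk]
    exact_mod_cast (by omega : 1 + k ≠ 0))).sub_mem S.x15_mem (by
    obtain ⟨k, hk⟩ := nbF.ip_nat n15
    rw [map_sub, LinearMap.sub_apply, Uf, hk, i6f, sub_zero]
    exact_mod_cast (by omega : 1 + k ≠ 0)) |>.sub_smul S.x9_mem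
  have U9' : T.ip (U - x6 - x15) x9 = 2 + n := by
    rw [map_sub, map_sub, LinearMap.sub_apply, LinearMap.sub_apply, U9, if9, i69, sub_zero,
      sub_zero]
  rw [U9', Algebra.smul_def, map_add, map_ofNat, map_natCast] at nq
  obtain ⟨q, hq⟩ : ∃ q, q = U - x6 - x15 - (2 + (n : A)) * x9 := ⟨_, rfl⟩
  rw [← hq] at nq
  have dF : T.deg F = 17 - T.deg r := by
    have := congrArg T.deg hu
    simp only [map_add, map_sub, map_mul, T.deg_bar, S.deg_b, S.deg_x9, S.deg_x10] at this
    linear_combination this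
  have dV : T.deg V = 27 - T.deg r := by
    have := congrArg T.deg hR
    simp only [map_add, map_sub, map_mul, T.deg_bar, S.deg_b, S.deg_x15, S.deg_b8,
      S.deg_x10] at this
    linear_combination this
  have dP : T.deg P = 3 * T.deg F - 15 := by
    rw [hP, map_sub, map_mul, map_mul, map_ofNat, S.deg_b, dV, dF, S.deg_x15]
    ring
  have hq' : q = b * F - n * x9 - P := by linear_combination hq + hU
  have dq : T.deg q = 15 - 9 * n := by
    rw [hq', map_sub, map_sub, map_mul, map_mul, map_natCast, S.deg_b, S.deg_x9, dP]
    ring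
  obtain rfl : n = 1 := by
    obtain ⟨k, hk⟩ := nq.deg_nat hI
    have : k + 9 * n = 15 := by
      rw [hk] at dq
      exact_mod_cast (by linear_combination dq : (k : ℂ) + 9 * n = 15)
    obtain rfl | rfl : n = 1 ∨ n = 0 := by omega
    · rfl
    · obtain ⟨m, hm⟩ := nP.deg_nat hI
      rw [nF.eq_zero_of_norm (by simpa using hn), map_zero, hm] at dP
      have : m + 15 = 0 := by exact_mod_cast (by linear_combination dP : (m : ℂ) + 15 = 0)
      omega
  rw [Nat.cast_one] at hn hq' dq bF9
  have rF : T.ip r F = 0 := by rw [T.ip_symm, Fr]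
  refine ⟨F, nF.mem_of_norm hn, P, q, nP, nq, by rw [dq]; norm_num, dP,
    by linear_combination -hq', ?_, ?_, bF9, ?_, ?_⟩
  · have e := S.ip_bar_mul_x9_self
    rw [eu, show T.bar b * y9 = P + E + x15 by linear_combination -hw] at e
    obtain ⟨w, ew⟩ : ∃ w, w = P + E := ⟨_, rfl⟩
    rw [← ew] at wf e ⊢
    simp only [map_add, LinearMap.add_apply, rr, rF, Fr, r0, F0, T.ip_symm x10 r, T.ip_symm x10 F,
      hn, i00, iff, wf, T.ip_symm x15 w] at e
    linear_combination -e
  · have e := congrArg T.bar hw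
    simp only [map_sub, map_mul, T.bar_bar, S.bar_y9] at e
    rw [e]
    linear_combination (-c) * S.c_mul_x9 + x9 * S.c_mul_c - x9 * S.bar_mul_b - S.c_mul_bar_x15 +
      b * eu + S.x10_mul_b - hE - hq'
  · rw [T.ip_mul_left, eR]
    simp only [map_add, Fr, FV, F8, F0, add_zero]
  · rw [T.ip_mul_left, S.bar_mul_b, map_add, F1, F8, add_zero]

lemma false_of_decomposition {s t f P q : A} (hs : s ∈ T.B) (ht : t ∈ T.B) (hst : T.ip s t = 0)
    {m : ℕ} (dm : T.deg s = m) (hm : m ≤ 6) (dt : T.deg t = 12 - T.deg s)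
    (hw : s + t = T.bar b * y9 - x15) (h9 : T.ip (s + t) x9 = 0)
    (hf : f ∈ T.B) (nP : T.IsNat P) (nq : T.IsNat q) (dq : T.deg q = 6)
    (dP : T.deg P = 3 * T.deg f - 15) (hbf : b * f = x9 + P + q)
    (hcw : c * T.bar (s + t) = 2 * x9 + (s + t) + q)
    (bf9 : T.ip (b * f) x9 = 1) (bff : T.ip (b * f) x15 = 0) (bfb : T.ip (b * f) b = 0) :
    False := by
  have hI := S.integral
  have ns : T.IsNat s := .of_mem hs
  have nt : T.IsNat t := .of_mem ht
  have nc : T.IsNat c := .of_mem S.c_mem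
  have nb : T.IsNat b := .of_mem S.b_mem
  have n9 : T.IsNat x9 := .of_mem S.x9_mem
  have hs' := T.bar_mem _ hs
  have ss := T.ip_self _ hs
  have tt := T.ip_self _ ht
  have ts : T.ip t s = 0 := by rw [T.ip_symm, hst]
  obtain ⟨s9, t9⟩ := ns.ip_eq_zero nt n9 h9
  have wf : T.ip (s + t) x15 = 0 := by
    rw [hw, map_sub, LinearMap.sub_apply, S.ip_bar_mul_y9_x15, T.ip_self _ S.x15_mem, sub_self]
  obtain ⟨sf, tf⟩ := ns.ip_eq_zero nt (.of_mem S.x15_mem) wf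
  have hcx9 : c * x9 = T.bar x15 + T.bar (s + t) := by
    have := congrArg T.bar hw
    simp only [map_sub, map_mul T.bar, T.bar_bar, S.bar_y9] at this
    linear_combination S.c_mul_x9 - this
  have cs9 : T.ip (c * T.bar s) x9 = 1 := by
    rw [S.ip_c_mul, hcx9]
    simp only [map_add, T.ip_bar_bar, ss, hst, sf]
    norm_num
  have ncs := nc.mul hI ns.bar
  have nct := nc.mul hI nt.bar
  -- `c * bar s` meets `s` or `t`
  obtain ⟨z, hz, hzst, hz0⟩ : ∃ z ∈ T.B, (z = s ∨ z = t) ∧ T.ip (c * T.bar s) z ≠ 0 := by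
    by_contra! h0
    have e := congrArg (fun v => T.ip v s) hcw
    have e1 : T.ip (c * T.bar t) s = 0 := by
      rw [S.ip_c_mul, ← T.ip_bar_bar, map_mul T.bar, S.bar_c, T.bar_bar, T.ip_symm,
        h0 t ht (Or.inr rfl)]
    obtain ⟨k, hk⟩ := nq.ip_nat ns
    simp only [map_add, mul_add, two_mul, LinearMap.add_apply, e1, h0 s hs (Or.inl rfl),
      T.ip_symm x9 s, s9, ss, ts, hk] at e
    have : 0 = 1 + k := by exact_mod_cast (by linear_combination e : (0 : ℂ) = 1 + k)
    omega
  have i9z : T.ip x9 z = 0 := by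
    rw [T.ip_symm]
    rcases hzst with rfl | rfl <;> assumption
  have na : T.IsNat (c * T.bar s - x9 - z) :=
    (ncs.sub_mem S.x9_mem (by rw [cs9]; exact one_ne_zero)).sub_mem hz (by
      rwa [map_sub, LinearMap.sub_apply, i9z, sub_zero])
  obtain ⟨a, ha⟩ : ∃ a, a = c * T.bar s - x9 - z := ⟨_, rfl⟩
  rw [← ha] at na
  have da : T.deg a = 3 * T.deg s - 9 - T.deg z := by
    rw [ha, map_sub, map_sub, map_mul, T.deg_bar, S.deg_c, S.deg_x9]
  have h5 : 5 ≤ m := by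
    obtain ⟨k, hk⟩ := na.deg_nat hI
    rw [hk] at da
    rcases hzst with rfl | rfl
    · have : k + 9 = 2 * m := by
        exact_mod_cast (by rw [← dm]; linear_combination da : (k : ℂ) + 9 = 2 * m)
      omega
    · have : k + 21 = 4 * m := by
        exact_mod_cast (by rw [← dm]; linear_combination da - dt : (k : ℂ) + 21 = 4 * m)
      omega
  have a1 : T.ip a 1 = 0 := by
    have e : T.ip (c * T.bar s) 1 = 0 := by
      rw [S.ip_c_mul, mul_one, ip_of_deg_ne hs' S.c_mem]
      rw [T.deg_bar, dm, S.deg_c]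
      exact_mod_cast (by omega : m ≠ 3)
    rw [show c * T.bar s = a + (x9 + z) by linear_combination -ha] at e
    exact (na.ip_eq_zero (n9.add (.of_mem hz)) (.of_mem T.one_mem) e).1
  obtain ⟨rfl, dz⟩ : m = 6 ∧ T.deg z = 6 := by
    obtain ⟨k, hk⟩ := na.deg_nat hI
    have h3 := na.three_le_deg hI S.noSmall a1 hk
    rw [hk] at da
    rcases hzst with rfl | rfl
    · have : k + 9 = 2 * m := by
        exact_mod_cast (by rw [← dm]; linear_combination da : (k : ℂ) + 9 = 2 * m)
      obtain rfl : m = 6 := by omega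
      exact ⟨rfl, by simpa using dm⟩
    · have : k + 21 = 4 * m := by
        exact_mod_cast (by rw [← dm]; linear_combination da - dt : (k : ℂ) + 21 = 4 * m)
      obtain rfl : m = 6 := by omega
      exact ⟨rfl, by rw [dt, dm]; norm_num⟩
  rw [Nat.cast_ofNat] at dm
  rw [dm] at dt
  norm_num at dt
  rw [dz, dm] at da
  norm_num at da
  have haB := na.mem_of_deg_three hI S.noSmall a1 da
  have aa := T.ip_self _ haB
  have i9a := ip_of_deg_ne S.x9_mem haB (by rw [da, S.deg_x9]; norm_num)
  have isa := ip_of_deg_ne hs haB (by rw [da, dm]; norm_num)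
  have ita := ip_of_deg_ne ht haB (by rw [da, dt]; norm_num)
  have csa : T.ip (c * T.bar s) a = 1 := by
    rw [show c * T.bar s = x9 + z + a by linear_combination -ha]
    simp only [map_add, LinearMap.add_apply, i9a, ip_of_deg_ne hz haB (by rw [da, dz]; norm_num),
      aa]
    norm_num
  have qa : T.ip q a ≠ 0 := by
    intro h0
    have e := congrArg (fun v => T.ip v a) hcw
    obtain ⟨k, hk⟩ := nct.ip_nat na
    simp only [map_add, mul_add, two_mul, LinearMap.add_apply, i9a, isa, ita, h0, csa, hk] at e
    have : 1 + k = 0 := by exact_mod_cast (by linear_combination e : (1 : ℂ) + k = 0)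
    omega
  have nqa := nq.sub_mem haB qa
  have q0 {z : A} (hz : z ∈ T.B) (dz : T.deg z = 6) : T.ip q z = 0 := by
    by_contra h0
    obtain ⟨k, hk⟩ := (nqa.sub_mem hz (by
      rwa [map_sub, LinearMap.sub_apply, ip_of_deg_ne haB hz (by rw [da, dz]; norm_num),
        sub_zero])).deg_nat hI
    rw [map_sub, map_sub, dq, da, dz] at hk
    have : k + 3 = 0 := by exact_mod_cast (by linear_combination -hk : (k : ℂ) + 3 = 0)
    omega
  -- `P` meets `s` or `t`, which bounds the degree of `f`
  have bfw : T.ip (b * f) (s + t) ≠ 0 := by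
    have e1 : T.ip (c * (b * f)) (T.bar x9) = T.ip (b * f) (s + t) := by
      rw [S.ip_c_mul, S.c_mul_bar_x9, show T.bar b * y9 = x15 + (s + t) by linear_combination -hw,
        map_add, bff, zero_add]
    have e2 : c * (b * f) = T.bar b * f + T.bar x6 * f := by
      linear_combination f * S.c_mul_b
    obtain ⟨k, hk⟩ := ((IsNat.of_mem S.x6_mem).bar.mul hI (.of_mem hf)).ip_nat n9.bar
    rw [e2, map_add, LinearMap.add_apply, hk, T.ip_bar_mul, S.b_mul_bar_x9, ← T.ip_mul_left,
      bf9] at e1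
    rw [← e1]
    exact_mod_cast (by omega : 1 + k ≠ 0)
  obtain ⟨u, hu, du, hPu⟩ : ∃ u ∈ T.B, T.deg u = 6 ∧ T.ip P u ≠ 0 := by
    by_contra! h0
    apply bfw
    rw [hbf]
    simp only [map_add, LinearMap.add_apply, h0 s hs dm, h0 t ht dt, q0 hs dm, q0 ht dt,
      T.ip_symm x9, s9, t9, add_zero]
  obtain ⟨n, hn⟩ := (IsNat.of_mem hf).deg_nat hI
  have h7 : 7 ≤ n := by
    obtain ⟨k, hk⟩ := (nP.sub_mem hu hPu).deg_nat hI
    rw [map_sub, dP, du, hn] at hk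
    have : k + 21 = 3 * n := by exact_mod_cast (by linear_combination -hk : (k : ℂ) + 21 = 3 * n)
    omega
  have bfa : T.ip (b * f) a ≠ 0 := by
    obtain ⟨k, hk⟩ := nP.ip_nat na
    obtain ⟨l, hl⟩ := nq.ip_nat na
    rw [hl] at qa
    rw [hbf, map_add, map_add, LinearMap.add_apply, LinearMap.add_apply, i9a, hk, hl]
    have : l ≠ 0 := by exact_mod_cast qa
    exact_mod_cast (by omega : 0 + k + l ≠ 0)
  have ng := (nb.bar.mul hI na).sub_mem hf (by rwa [T.ip_bar_mul, T.ip_symm])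
  have g1 : T.ip (T.bar b * a - f) 1 = 0 := by
    rw [map_sub, LinearMap.sub_apply, T.ip_bar_mul, mul_one,
      T.ip_ne a haB b S.b_mem (by rintro rfl; exact bfa bfb),
      ip_of_deg_ne hf T.one_mem (by rw [hn, map_one]; exact_mod_cast (by omega : n ≠ 1)), sub_zero]
  have hg : T.bar b * a = f := by
    obtain ⟨k, hk⟩ := ng.deg_nat hI
    have h3 := ng.three_le_deg hI S.noSmall g1 hk
    refine ng.eq_of_sub_deg hI (sub_eq_zero.1 ?_)
    rw [← map_sub, hk]
    rw [map_sub, map_mul, T.deg_bar, S.deg_b, da, hn] at hk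
    have : k + n = 9 := by exact_mod_cast (by linear_combination -hk : (k : ℂ) + n = 9)
    obtain rfl : k = 0 := by omega
    exact Nat.cast_zero
  have hca : c * a ∈ T.B := (nc.mul hI na).mem_of_norm (by
    rw [← S.ip_bar_mul_bar_mul, hg, T.ip_self _ hf])
  rw [S.ip_c_mul, ip_of_deg_ne hs' hca (by
    rw [T.deg_bar, map_mul, S.deg_c, da, dm]; norm_num)] at csa
  exact zero_ne_one csa

/-- The element `x9` is a constituent of `bar b * y9`. -/
lemma ip_bar_mul_y9_sub_ne_zero : T.ip (T.bar b * y9 - x15) x9 ≠ 0 := by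
  intro h
  obtain ⟨w, hw⟩ : ∃ w, w = T.bar b * y9 - x15 := ⟨_, rfl⟩
  rw [← hw] at h
  obtain ⟨f, hf, P, q, nP, nq, dq, dP, hbf, ww, hcw, bf9, bff, bfb⟩ := S.exists_of_ip_eq_zero hw h
  have nw : T.IsNat w := hw ▸ S.isNat_bar_mul_y9_sub
  obtain ⟨s, hs, t, ht, rfl, hst⟩ := nw.eq_add_of_norm ww
  have dw := congrArg T.deg hw
  rw [map_add, map_sub, map_mul, T.deg_bar, S.deg_b, S.deg_y9, S.deg_x15] at dw
  obtain ⟨m, hm⟩ := (IsNat.of_mem hs).deg_nat S.integral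
  obtain ⟨n, hn⟩ := (IsNat.of_mem ht).deg_nat S.integral
  have hmn : m + n = 12 := by
    rw [hm, hn] at dw
    exact_mod_cast (by linear_combination dw : (m : ℂ) + n = 12)
  by_cases h6 : m ≤ 6
  · exact S.false_of_decomposition hs ht hst hm h6 (by linear_combination dw) hw h hf nP nq dq dP
      hbf hcw bf9 bff bfb
  · rw [add_comm s t] at hw h hcw
    exact S.false_of_decomposition ht hs (by rw [T.ip_symm, hst]) hn (by omega)
      (by linear_combination dw) hw h hf nP nq dq dP hbf hcw bf9 bff bfb

/-- The elements of degree three completing the products of `x9` with `c` and with `b`. -/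
lemma exists_deg_three :
    ∃ s ∈ T.B, ∃ y ∈ T.B, T.deg s = 3 ∧ T.deg y = 3 ∧ T.bar y = y ∧
      T.bar b * y9 = x15 + x9 + s ∧ c * s = T.bar x9 ∧ b * s = y9 ∧ x6 * s = y15 + y := by
  have hI := S.integral
  have nb : T.IsNat b := .of_mem S.b_mem
  have nc : T.IsNat c := .of_mem S.c_mem
  have n9 : T.IsNat x9 := .of_mem S.x9_mem
  have if1 := ip_of_deg_ne S.x15_mem T.one_mem (by norm_num [S.deg_x15])
  have i91 := ip_of_deg_ne S.x9_mem T.one_mem (by norm_num [S.deg_x9])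
  have i96 := ip_of_deg_ne S.x9_mem S.x6_mem (by norm_num [S.deg_x6, S.deg_x9])
  have i9f := ip_of_deg_ne S.x9_mem S.x15_mem (by norm_num [S.deg_x9, S.deg_x15])
  have i99 := T.ip_self _ S.x9_mem
  obtain ⟨s, es⟩ : ∃ s, s = T.bar b * y9 - x15 - x9 := ⟨_, rfl⟩
  have ns : T.IsNat s :=
    es ▸ S.isNat_bar_mul_y9_sub.sub_mem S.x9_mem S.ip_bar_mul_y9_sub_ne_zero
  have ds : T.deg s = 3 := by
    rw [es, map_sub, map_sub, map_mul, T.deg_bar, S.deg_b, S.deg_y9, S.deg_x15, S.deg_x9]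
    norm_num
  have hs : s ∈ T.B := ns.mem_of_deg_three hI S.noSmall (by
    rw [es]
    simp only [map_sub, LinearMap.sub_apply, S.ip_bar_mul_y9_one, if1, i91, sub_zero]) ds
  have hy9 : T.bar b * y9 = x15 + x9 + s := by linear_combination -es
  have is9 := ip_of_deg_ne hs S.x9_mem (by norm_num [ds, S.deg_x9])
  have isf := ip_of_deg_ne hs S.x15_mem (by norm_num [ds, S.deg_x15])
  have ss := T.ip_self _ hs
  have hcs : c * s = T.bar x9 := by
    refine ((nc.mul hI ns).sub_mem (T.bar_mem _ S.x9_mem) ?_).eq_of_sub_deg hI ?_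
    · rw [S.ip_c_mul, S.c_mul_bar_x9, hy9, map_add, map_add, isf, is9, ss]
      norm_num
    · rw [map_mul, T.deg_bar, S.deg_c, ds, S.deg_x9]
      norm_num
  obtain ⟨y, ey⟩ : ∃ y, y = b * x9 - y15 - y9 := ⟨_, rfl⟩
  have i1 : T.ip (b * x9) y15 = 1 := by
    rw [T.ip_mul_left, S.bar_mul_y15, two_mul, map_add, map_add, map_add, i96, i9f, i99]
    norm_num
  have i2 : T.ip (b * x9) y9 = 1 := by
    rw [T.ip_mul_left, hy9, map_add, map_add, i9f, i99, T.ip_symm x9, is9]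
    norm_num
  have ny : T.IsNat y := ey ▸ ((nb.mul hI n9).sub_mem S.y15_mem (by
    rw [i1]; exact one_ne_zero)).sub_mem S.y9_mem (by
    rw [map_sub, LinearMap.sub_apply, i2,
      ip_of_deg_ne S.y15_mem S.y9_mem (by norm_num [S.deg_y15, S.deg_y9]), sub_zero]
    exact one_ne_zero)
  have dy : T.deg y = 3 := by
    rw [ey, map_sub, map_sub, map_mul, S.deg_b, S.deg_y9, S.deg_x9, S.deg_y15]
    norm_num
  have hy : y ∈ T.B := ny.mem_of_deg_three hI S.noSmall (by
    rw [ey, map_sub, map_sub, LinearMap.sub_apply, LinearMap.sub_apply, T.ip_mul_left, mul_one,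
      ip_of_deg_ne S.x9_mem (T.bar_mem _ S.b_mem) (by norm_num [T.deg_bar, S.deg_b, S.deg_x9]),
      ip_of_deg_ne S.y15_mem T.one_mem (by norm_num [S.deg_y15]),
      ip_of_deg_ne S.y9_mem T.one_mem (by norm_num [S.deg_y9])]
    norm_num) dy
  have yr : T.bar y = y := by
    have e : y = x10 * (c + b6) - b6 - c - y15 - y15 - y15 - y15 - y9 - y9 := by
      linear_combination ey + (-b) * S.x10_mul_b + x10 * S.b_mul_b - S.b_mul_x15 - S.x6_mul_b
    rw [e]
    simp only [map_sub, map_mul T.bar, map_add, S.bar_x10, S.bar_c, S.bar_b6, S.bar_y15, S.bar_y9]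
  have e : b * s + x6 * s = y15 + y9 + y := by
    have := congrArg T.bar ey
    simp only [map_sub, map_mul T.bar, S.bar_y15, S.bar_y9, yr] at this
    linear_combination (-s) * S.c_mul_bar + T.bar b * hcs - this
  have nbs := nb.mul hI ns
  have hbs : b * s ∈ T.B := nbs.mem_of_norm (by
    rw [S.ip_b_mul_b_mul, hcs, T.ip_bar_bar, i99])
  have dbs : T.deg (b * s) = 9 := by
    rw [map_mul, S.deg_b, ds]
    norm_num
  have hbs9 : b * s = y9 := by
    refine eq_of_ip_ne_zero hbs S.y9_mem ?_
    have h1 := congrArg (T.ip (b * s)) e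
    obtain ⟨k, hk⟩ := nbs.ip_nat ((IsNat.of_mem S.x6_mem).mul hI ns)
    rw [map_add, map_add, map_add, hk, T.ip_self _ hbs,
      ip_of_deg_ne hbs S.y15_mem (by norm_num [dbs, S.deg_y15]),
      ip_of_deg_ne hbs hy (by norm_num [dbs, dy]), zero_add, add_zero] at h1
    rw [← h1]
    exact_mod_cast (by omega : 1 + k ≠ 0)
  exact ⟨s, hs, y, hy, ds, dy, yr, hy9, hcs, hbs9, by linear_combination e - hbs9⟩

lemma exists_table (hnr : T.bar b ≠ b) :
    ∃ d ∈ T.B, T.deg d = 3 ∧ d ≠ c ∧ d ≠ b ∧ d ≠ T.bar b ∧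
      x9 * c = T.bar x15 + d + T.bar x9 ∧
      ∃ c8 ∈ T.B, T.deg c8 = 8 ∧ T.bar c8 = c8 ∧ c8 ≠ b8 ∧ d * T.bar d = 1 + c8 ∧
        ∃ y ∈ T.B, T.deg y = 3 ∧ T.bar y = y ∧ y ≠ b ∧ y ≠ T.bar b ∧ y ≠ c ∧
          d * d = b6 + y ∧ y * y = 1 + c8 := by
  obtain ⟨s, hs, g, hg, ds, dg, gr, hy9, hcs, hbs, hx6s⟩ := S.exists_deg_three
  have hI := S.integral
  have nb : T.IsNat b := .of_mem S.b_mem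
  have ns : T.IsNat s := .of_mem hs
  have n9 : T.IsNat x9 := .of_mem S.x9_mem
  have h1 := T.one_mem
  have d1 : T.deg 1 = 1 := map_one _
  have i11 := T.ip_self _ h1
  have ss := T.ip_self _ hs
  have i99 := T.ip_self _ S.x9_mem
  have iff := T.ip_self _ S.x15_mem
  have i9f := ip_of_deg_ne S.x9_mem S.x15_mem (by norm_num [S.deg_x9, S.deg_x15])
  have is9 := ip_of_deg_ne hs S.x9_mem (by norm_num [ds, S.deg_x9])
  have isf := ip_of_deg_ne hs S.x15_mem (by norm_num [ds, S.deg_x15])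
  have hs' := T.bar_mem _ hs
  have hcs' : c * T.bar s = x9 := by
    simpa [T.bar_bar, S.bar_c] using congrArg T.bar hcs
  have hy9' : b * y9 = T.bar x15 + T.bar x9 + T.bar s := by
    simpa [T.bar_bar, S.bar_y9] using congrArg T.bar hy9
  have hb6s : b6 * s = T.bar x15 + T.bar s := by
    linear_combination (-s) * S.b_mul_b + b * hbs - hcs + hy9'
  have hb8s : b8 * s = x15 + x9 := by
    linear_combination (-s) * S.c_mul_c + c * hcs + S.c_mul_bar_x9 + hy9
  -- the square of `bar s`
  have iss6 : T.ip (T.bar s * T.bar s) b6 = 1 := by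
    rw [T.ip_bar_mul, mul_comm s, hb6s, map_add, T.ip_bar_bar, T.ip_bar_bar, isf, ss, zero_add]
  obtain ⟨y, ey⟩ : ∃ y, y = T.bar s * T.bar s - b6 := ⟨_, rfl⟩
  have ny : T.IsNat y := ey ▸ (ns.bar.mul hI ns.bar).sub_mem S.b6_mem (by
    rw [iss6]; exact one_ne_zero)
  have dy : T.deg y = 3 := by
    rw [ey, map_sub, map_mul, T.deg_bar, ds, S.deg_b6]
    norm_num
  have y1 : T.ip y 1 = T.ip (T.bar s) s := by
    rw [ey, map_sub, LinearMap.sub_apply, T.ip_bar_mul, mul_one,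
      ip_of_deg_ne S.b6_mem h1 (by norm_num [S.deg_b6]), sub_zero]
  have hy : y ∈ T.B := ny.mem_of_deg_three hI S.noSmall (by
    by_contra h0
    have n2 := ny.sub_mem h1 h0
    have d2 : T.deg (y - 1) = (2 : ℕ) := by
      rw [map_sub, dy, d1]
      norm_num
    have := n2.three_le_deg hI S.noSmall (by
      rw [map_sub, LinearMap.sub_apply, i11, y1,
        eq_of_ip_ne_zero hs' hs (by rwa [← y1]), ss, sub_self]) d2 two_ne_zero
    omega) dy
  have hss : T.bar s * T.bar s = b6 + y := by linear_combination -ey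
  have hss' : s * s = b6 + T.bar y := by
    simpa [T.bar_bar, S.bar_b6] using congrArg T.bar hss
  have i6y := ip_of_deg_ne S.b6_mem hy (by norm_num [S.deg_b6, dy])
  -- the product `s * bar s`
  obtain ⟨c8, e8⟩ : ∃ c8, c8 = s * T.bar s - 1 := ⟨_, rfl⟩
  have hsc : s * T.bar s = 1 + c8 := by linear_combination -e8
  have iss1 : T.ip (s * T.bar s) 1 = 1 := by
    rw [T.ip_mul_left, mul_one, T.ip_bar_bar, ss]
  have nsc : T.IsNat c8 := e8 ▸ (ns.mul hI ns.bar).sub_mem h1 (by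
    rw [iss1]; exact one_ne_zero)
  have c81 : T.ip c8 1 = 0 := by
    rw [e8, map_sub, LinearMap.sub_apply, iss1, i11, sub_self]
  have hc8 : c8 ∈ T.B := nsc.mem_of_norm (by
    have e : T.ip (s * T.bar s) (s * T.bar s) = T.ip (T.bar s * T.bar s) (T.bar s * T.bar s) := by
      rw [T.ip_mul_left s, T.ip_bar_mul]
      congr 1
      ring
    rw [hss, hsc] at e
    simp only [map_add, LinearMap.add_apply, c81, T.ip_symm 1 c8, i11, i6y, T.ip_symm y b6,
      T.ip_self _ hy, T.ip_self _ S.b6_mem] at e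
    linear_combination e)
  have d8 : T.deg c8 = 8 := by
    rw [e8, map_sub, map_mul, T.deg_bar, ds, d1]
    norm_num
  have c8r : T.bar c8 = c8 := by
    rw [e8, map_sub, map_mul, T.bar_bar, map_one, mul_comm]
  have c88 := T.ip_self _ hc8
  have c8b8 : T.ip c8 b8 = 0 := by
    have e : T.ip (s * T.bar s) (T.bar b * b) = 1 := by
      rw [T.ip_symm, T.ip_bar_mul, T.ip_symm, ← mul_assoc, mul_comm _ (T.bar s), T.ip_bar_mul,
        mul_comm s b, hbs, T.ip_self _ S.y9_mem]
    rw [S.bar_mul_b, map_add, iss1, hsc, map_add, LinearMap.add_apply,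
      ip_of_deg_ne h1 S.b8_mem (by norm_num [S.deg_b8])] at e
    linear_combination e
  have hne8 : c8 ≠ b8 := by
    rintro rfl
    rw [c8b8] at c88
    exact zero_ne_one c88
  -- the remaining constituents of `bar b * x9`
  obtain ⟨r, er⟩ : ∃ r, r = T.bar b * s := ⟨_, rfl⟩
  have hr : r ∈ T.B := er ▸ (nb.bar.mul hI ns).mem_of_norm (by
    rw [S.ip_bar_mul_bar_mul, hcs, T.ip_bar_bar, i99])
  have dr : T.deg r = 9 := by
    rw [er, map_mul, T.deg_bar, S.deg_b, ds]
    norm_num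
  have hbr : b * r = s + x15 + x9 := by
    linear_combination b * er + s * S.bar_mul_b + hb8s
  have rr := T.ip_self _ hr
  have i0r := ip_of_deg_ne S.x10_mem hr (by norm_num [S.deg_x10, dr])
  have ir8 := ip_of_deg_ne hr S.b8_mem (by norm_num [S.deg_b8, dr])
  have i00 := T.ip_self _ S.x10_mem
  have i08 := ip_of_deg_ne S.x10_mem S.b8_mem (by norm_num [S.deg_x10, S.deg_b8])
  have ixr : T.ip (T.bar b * x9) r = 1 := by
    rw [T.ip_bar_mul, hbr, map_add, map_add, T.ip_symm x9 s, is9, i9f, i99]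
    norm_num
  obtain ⟨k, ek⟩ : ∃ k, k = T.bar b * x9 - x10 - r := ⟨_, rfl⟩
  have nk : T.IsNat k := ek ▸ ((nb.bar.mul hI n9).sub_mem S.x10_mem (by
    rw [S.ip_bar_mul_x9_x10]; exact one_ne_zero)).sub_mem hr (by
    rw [map_sub, LinearMap.sub_apply, ixr, i0r, sub_zero]; exact one_ne_zero)
  have hk : k ∈ T.B := nk.mem_of_norm (by
    have e := S.ip_bar_mul_x9_self
    rw [hy9] at e
    simp only [map_add, LinearMap.add_apply, iff, i9f, isf, T.ip_symm x15 x9, T.ip_symm x15 s, i99,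
      is9, T.ip_symm x9 s, ss] at e
    rw [ek]
    simp only [map_sub, LinearMap.sub_apply, e, T.ip_symm r, T.ip_symm x10 (_ * _),
      S.ip_bar_mul_x9_x10, ixr, i00, i0r, rr]
    norm_num)
  have dk : T.deg k = 8 := by
    rw [ek, map_sub, map_sub, map_mul, T.deg_bar, S.deg_b, S.deg_x9, S.deg_x10, dr]
    norm_num
  obtain ⟨R, eR⟩ : ∃ R, R = T.bar b * x15 - b8 - x10 := ⟨_, rfl⟩
  have nR : T.IsNat R := eR ▸ S.isNat_bar_mul_x15_sub
  have dR : T.deg R = 27 := by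
    rw [eR, map_sub, map_sub, map_mul, T.deg_bar, S.deg_b, S.deg_x15, S.deg_b8, S.deg_x10]
    norm_num
  have R1 : T.ip R 1 = 0 := by
    rw [eR]
    simp only [map_sub, LinearMap.sub_apply, S.ip_bar_mul_x15_one,
      ip_of_deg_ne S.b8_mem h1 (by norm_num [S.deg_b8]),
      ip_of_deg_ne S.x10_mem h1 (by norm_num [S.deg_x10]), sub_zero]
  have irf : T.ip r (T.bar b * x15) = 1 := by
    rw [T.ip_symm, T.ip_bar_mul, hbr, map_add, map_add, T.ip_symm x15 s, isf, iff,
      T.ip_symm x15 x9, i9f]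
    norm_num
  have Rr : T.ip R r = 1 := by
    rw [T.ip_symm, eR, map_sub, map_sub, irf, ir8, T.ip_symm r x10, i0r, sub_zero, sub_zero]
  have Rk : T.ip R k = 1 := by
    have e1 : T.ip k b8 = 0 := by
      rw [ek]
      simp only [map_sub, LinearMap.sub_apply, S.ip_bar_mul_x9_b8, i08, ir8, sub_zero]
    have e2 : T.ip k (T.bar b * x15) = 1 := by
      rw [ek]
      simp only [map_sub, LinearMap.sub_apply, S.ip_bar_mul_x9_bar_mul_x15, irf,
        T.ip_symm x10 (_ * _), S.ip_bar_mul_x15_x10, hy9, map_add, LinearMap.add_apply, i99, is9,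
        T.ip_symm x15 x9, i9f]
      norm_num
    rw [T.ip_symm, eR, map_sub, map_sub, e1, e2,
      ip_of_deg_ne hk S.x10_mem (by norm_num [dk, S.deg_x10])]
    norm_num
  have Rc8 : T.ip R c8 = 1 := by
    have e : T.ip (b6 * s) (b6 * s) = T.ip (b6 * b6) (s * T.bar s) := by
      rw [T.ip_mul_left b6 b6, mul_comm b6 s, T.ip_mul_left s, S.bar_b6]
      congr 1
      ring
    have e6 : b6 * b6 = 1 + b8 + R := by
      linear_combination (-b6) * S.b_mul_b + b * S.b6_mul_b - S.c_mul_b6 + S.bar_mul_b - eR +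
        S.b_mul_bar_x15
    rw [hb6s, e6, hsc] at e
    simp only [map_add, LinearMap.add_apply, T.ip_bar_bar, iff, isf, T.ip_symm x15 s, ss, i11,
      ip_of_deg_ne S.b8_mem h1 (by norm_num [S.deg_b8]), R1, T.ip_symm 1 c8, c81, T.ip_symm b8 c8,
      c8b8] at e
    linear_combination -e
  obtain rfl : c8 = k := by
    by_contra hne
    have nl := ((nR.sub_mem hr (by rw [Rr]; exact one_ne_zero)).sub_mem hk (by
      rw [map_sub, LinearMap.sub_apply, Rk, ip_of_deg_ne hr hk (by norm_num [dk, dr]), sub_zero]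
      exact one_ne_zero)).sub_mem hc8 (by
      rw [map_sub, map_sub, LinearMap.sub_apply, LinearMap.sub_apply, Rc8,
        ip_of_deg_ne hr hc8 (by norm_num [d8, dr]), T.ip_ne k hk c8 hc8 (Ne.symm hne), sub_zero,
        sub_zero]
      exact one_ne_zero)
    have d2 : T.deg (R - r - k - c8) = (2 : ℕ) := by
      rw [map_sub, map_sub, map_sub, dR, dr, dk, d8]
      norm_num
    have := nl.three_le_deg hI S.noSmall (by
      simp only [map_sub, LinearMap.sub_apply, R1, c81,
        ip_of_deg_ne hr h1 (by norm_num [dr]), ip_of_deg_ne hk h1 (by norm_num [dk]),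
        sub_zero]) d2 two_ne_zero
    omega
  have hc8s : c8 * s = x6 + T.bar x6 * T.bar y := by
    linear_combination s * ek - s * S.c_mul_y9 - c * s * hbs + c * b * hss' + c * S.b6_mul_b +
      S.c_mul_bar + S.c_mul_bar_x15 + T.bar y * S.c_mul_b + s * S.c_mul_b6 - c * hb6s -
      S.c_mul_bar_x15 - hcs' + hb8s - s * er - T.bar b * hss' - S.b6_mul_bar
  have hyg : T.bar y = g := by
    refine eq_of_ip_ne_zero (T.bar_mem _ hy) hg ?_
    have e : T.ip (c8 * s) s = 1 := by
      rw [mul_comm, T.ip_mul_left, mul_comm, hsc, map_add, c81, c88, zero_add]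
    rw [hc8s, map_add, LinearMap.add_apply, T.ip_bar_mul, hx6s, map_add,
      ip_of_deg_ne S.x6_mem hs (by norm_num [S.deg_x6, ds]),
      ip_of_deg_ne (T.bar_mem _ hy) S.y15_mem (by norm_num [T.deg_bar, S.deg_y15, dy])] at e
    rw [zero_add, zero_add] at e
    rw [e]
    exact one_ne_zero
  obtain rfl : y = g := by rw [← T.bar_bar y, hyg, gr]
  rw [gr] at hss'
  have yy := T.ip_self _ hy
  have hsy : T.bar s * y = x6 + s := by
    have i1 : T.ip (T.bar s * y) x6 = 1 := by
      rw [T.ip_bar_mul, mul_comm, hx6s, map_add, yy,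
        ip_of_deg_ne hy S.y15_mem (by norm_num [S.deg_y15, dy]), zero_add]
    have i2 : T.ip (T.bar s * y) s = 1 := by
      rw [T.ip_bar_mul, hss', map_add, yy, T.ip_symm y b6, i6y, zero_add]
    have n := ((ns.bar.mul hI ny).sub_mem S.x6_mem (by rw [i1]; exact one_ne_zero)).sub_mem hs (by
      rw [map_sub, LinearMap.sub_apply, i2, ip_of_deg_ne S.x6_mem hs (by norm_num [S.deg_x6, ds]),
        sub_zero]
      exact one_ne_zero)
    rw [sub_sub] at n
    refine n.eq_of_sub_deg hI ?_
    rw [map_mul, map_add, T.deg_bar, ds, dy, S.deg_x6]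
    norm_num
  have hyy : y * y = 1 + c8 := by
    have i1 : T.ip (y * y) 1 = 1 := by rw [T.ip_mul_left, mul_one, gr, yy]
    have i8 : T.ip (y * y) c8 = 1 := by
      have e : T.ip (T.bar s * y) (T.bar s * y) = T.ip (y * y) (s * T.bar s) := by
        rw [T.ip_bar_mul, T.ip_mul_left y, gr]
        congr 1
        ring
      rw [hsy, hsc] at e
      simp only [map_add, LinearMap.add_apply, T.ip_self _ S.x6_mem,
        ip_of_deg_ne S.x6_mem hs (by norm_num [S.deg_x6, ds]), T.ip_symm s x6, ss, i1] at e
      linear_combination -e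
    have n := ((ny.mul hI ny).sub_mem h1 (by rw [i1]; exact one_ne_zero)).sub_mem hc8 (by
      rw [map_sub, LinearMap.sub_apply, i8, T.ip_symm 1, c81, sub_zero]
      exact one_ne_zero)
    rw [sub_sub] at n
    refine n.eq_of_sub_deg hI ?_
    rw [map_mul, map_add, dy, d1, d8]
    norm_num
  have hx9' := T.bar_mem _ S.x9_mem
  have dx9' : T.deg (T.bar x9) = 9 := by rw [T.deg_bar, S.deg_x9]
  refine ⟨T.bar s, hs', by rw [T.deg_bar, ds], ?_, ?_, ?_, ?_, c8, hc8, d8, c8r, hne8, ?_, y, hy,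
    dy, gr, ?_, ?_, ?_, hss, hyy⟩
  · intro e
    have := ip_of_deg_ne S.x9_mem h1 (by norm_num [S.deg_x9])
    rw [← hcs', e, T.ip_mul_left, mul_one, S.bar_c, T.ip_self _ S.c_mem] at this
    exact one_ne_zero this
  · intro e
    have := ip_of_deg_ne S.x9_mem (T.bar_mem _ S.x6_mem)
      (by norm_num [T.deg_bar, S.deg_x9, S.deg_x6])
    rw [← hcs', e, S.c_mul_b, map_add, LinearMap.add_apply, T.ip_bar_bar, T.ip_bar_bar,
      T.ip_self _ S.x6_mem, ip_of_deg_ne S.b_mem S.x6_mem (by norm_num [S.deg_b, S.deg_x6])] at this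
    norm_num at this
  · intro e
    have := ip_of_deg_ne S.x9_mem S.x6_mem (by norm_num [S.deg_x9, S.deg_x6])
    rw [← hcs', e, S.c_mul_bar, map_add, LinearMap.add_apply, T.ip_self _ S.x6_mem,
      ip_of_deg_ne S.b_mem S.x6_mem (by norm_num [S.deg_b, S.deg_x6])] at this
    norm_num at this
  · linear_combination S.c_mul_x9 + hy9'
  · rw [T.bar_bar, mul_comm, hsc]
  · rintro rfl
    exact hnr gr
  · rintro rfl
    rw [T.bar_bar] at gr
    exact hnr gr.symm
  · rintro rfl
    exact hne8 (by linear_combination S.c_mul_c - hyy)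

end Setup

end TAData

/-- Lemmas 8.4, 8.5: for a NITA generated by non-real `b₃` with
`b̄₃b₃ = 1 + b₈`, `b₃² = c₃ + b₆`, `c₃` real and `(b₈b₃, b₈b₃) = 3`, with
`x₆`, `x₁₅`, `x₁₀`, `x₉` given by `b̄₃c₃ = b₃ + x₆`, `b₆b̄₃ = b₃ + x₁₅`,
`x₆b̄₃ = b₈ + x₁₀`, `x₁₀b₃ = x₁₅ + x₆ + x₉`: there are `d₃ ∉ {c₃, b₃, b̄₃}`
and `d₉ = x̄₉` with `x₉c₃ = x̄₁₅ + d₃ + x̄₉`, `d₃d̄₃ = 1 + c₈` for a real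
`c₈ ≠ b₈`, `d₃² = b₆ + y₃` with `y₃` real, `y₃ ∉ {b₃, b̄₃, c₃}`, and
`y₃² = 1 + c₈`. -/
theorem stmt_18 {A : Type} [CommRing A] [Algebra ℂ A] (T : TAData A)
    (hInt : T.Integral) (hSmall : T.NoSmall)
    (b3 b8 c3 b6 x6 x15 x10 x9 : A)
    (hb3 : b3 ∈ T.B) (hd3 : T.deg b3 = 3) (hnr : T.bar b3 ≠ b3)
    (hgen : T.GeneratedBy b3)
    (hb8 : b8 ∈ T.B) (hd8 : T.deg b8 = 8)
    (hmul : T.bar b3 * b3 = 1 + b8)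
    (hc3 : c3 ∈ T.B) (hdc3 : T.deg c3 = 3) (hrealc3 : T.bar c3 = c3)
    (hb6 : b6 ∈ T.B) (hd6 : T.deg b6 = 6)
    (hsq : b3 * b3 = c3 + b6)
    (hip : T.ip (b8 * b3) (b8 * b3) = 3)
    (hx6 : x6 ∈ T.B) (hdx6 : T.deg x6 = 6) (hnrx6 : T.bar x6 ≠ x6)
    (hx6eq : T.bar b3 * c3 = b3 + x6)
    (hx15 : x15 ∈ T.B) (hdx15 : T.deg x15 = 15)
    (hx15eq : b6 * T.bar b3 = b3 + x15)
    (hx10 : x10 ∈ T.B) (hdx10 : T.deg x10 = 10) (hrealx10 : T.bar x10 = x10)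
    (hx10eq : x6 * T.bar b3 = b8 + x10)
    (hx9 : x9 ∈ T.B) (hdx9 : T.deg x9 = 9)
    (hx9eq : x10 * b3 = x15 + x6 + x9) :
    ∃ d3 ∈ T.B, T.deg d3 = 3 ∧ d3 ≠ c3 ∧ d3 ≠ b3 ∧ d3 ≠ T.bar b3 ∧
      x9 * c3 = T.bar x15 + d3 + T.bar x9 ∧
      ∃ c8 ∈ T.B, T.deg c8 = 8 ∧ T.bar c8 = c8 ∧ c8 ≠ b8 ∧
        d3 * T.bar d3 = 1 + c8 ∧
        ∃ y3 ∈ T.B, T.deg y3 = 3 ∧ T.bar y3 = y3 ∧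
          y3 ≠ b3 ∧ y3 ≠ T.bar b3 ∧ y3 ≠ c3 ∧
          d3 * d3 = b6 + y3 ∧ y3 * y3 = 1 + c8 := by
  obtain ⟨y9, y15, S⟩ := TAData.exists_setup hInt hSmall hb3 hd3 hb8 hd8 hmul hc3 hdc3 hrealc3 hb6 hd6
    hsq hx6 hdx6 (by rw [mul_comm, hx6eq]) hx15 hdx15 hx15eq hx10 hdx10 hrealx10 hx10eq hx9 hdx9
    hx9eq
  exact S.exists_table hnr
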